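/- arXiv:1504.00471 — 3 statements merged into one kernel-verified Lean document; each statement's English description precedes it below -/
import Mathlib

section
/- Let X be a complex Banach space and let T : X → X be a bounded linear operator which is power bounded, i.e. sup_{n≥0} ‖T^n‖ < ∞. For every α ∈ (0,1), the operator T_α = Σ_{k=1}^∞ a_{α,k} T^k is a Ritt operator: there exists a constant C such that ‖T_α^n‖ ≤ C for all n ≥ 0 and n‖T_α^n − T_α^{n−1}‖ ≤ C for all n ≥ 1. -/
/-!
Write `F(z) = 1 - (1 - z) ^ α = ∑ aₖ zᵏ`. For `0 < α < 1` the coefficients `aₖ` are nonnegative with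
sum at most `1`, so `p ↦ p(T)` is a bounded homomorphism from the algebra of absolutely summable
power series (`AbsSummable`, `wienerNorm`, `evalSeries`) sending `F` to `T_α`. Hence `T_α` is power
bounded, and `n (T_αⁿ - T_αⁿ⁺¹)` is bounded as soon as the `ℓ¹` norm of the coefficients of
`Fⁿ (1 - F)` is `O(1 / n)`.

This `ℓ¹` estimate is proved for an exponent `1 / 2 < β < 1` (`wienerNorm_pow_mul_one_sub_le`). On
the unit disc `|F|² ≤ 1 - c |1 - z| ^ β` (`norm_sq_one_sub_cpow_le`), because `(1 - z) ^ β` lies in a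
sector of half-angle `β π / 2 < π / 2`. This gives at `z = r exp (iθ)`, uniformly in `1 / 2 ≤ r < 1`,
the bounds `n |Fⁿ (1 - F)| ≤ K exp (-b n |θ| ^ β)` and
`|D (Fⁿ (1 - F))| ≤ K |θ| ^ (β - 1) exp (-b n |θ| ^ β)`, where `D = d/dz`. Both
right-hand sides are square integrable, the second one since `β > 1 / 2`; Bessel's inequality turns
them into weighted `ℓ²` bounds on the coefficients, and Carlson's inequality at the scale `L = n ^ (1 / β)` into the `ℓ¹` bound.
Letting `r` tend to `1` concludes.

A general `α` is written `α = β γ` with `1 / 2 < β < 1` and `0 < γ < 1`. Then `T_α = (T_γ)_β`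
(`fracPow_fracPow`, an instance of the composition rule `evalSeries_evalSeries`), and `T_γ` is power
bounded, so the case of `β` applies to it.
-/

open scoped BigOperators

/-- The coefficient `a_{α,k} = (-1)^(k-1) · α(α-1)⋯(α-k+1)/k!`. -/
noncomputable def aCoef (α : ℝ) (k : ℕ) : ℝ :=
  (-1 : ℝ) ^ (k - 1) * (∏ i ∈ Finset.range k, (α - i)) / (Nat.factorial k)

/-- The `fractional power` `T_α = Σ_{k=1}^∞ a_{α,k} T^k` of a power bounded operator. -/
noncomputable def fracPow {X : Type*} [NormedAddCommGroup X] [NormedSpace ℂ X]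
    (α : ℝ) (T : X →L[ℂ] X) : X →L[ℂ] X :=
  ∑' k : ℕ, (aCoef α (k + 1) : ℂ) • T ^ (k + 1)

/-! ### Absolutely summable power series and their functional calculus -/

/-- The power series `p` has absolutely summable coefficients. -/
def AbsSummable (p : PowerSeries ℂ) : Prop :=
  Summable fun k => ‖PowerSeries.coeff k p‖

/-- The `ℓ¹` norm of the coefficients of `p`; it is meaningful when `AbsSummable p` holds. -/
noncomputable def wienerNorm (p : PowerSeries ℂ) : ℝ :=
  ∑' k, ‖PowerSeries.coeff k p‖

/-- The value `∑ pₖ xᵏ` of the power series `p` at an element `x` of a complex Banach algebra. -/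
noncomputable def evalSeries {A : Type*} [NormedRing A] [NormedAlgebra ℂ A]
    (p : PowerSeries ℂ) (x : A) : A :=
  ∑' k, PowerSeries.coeff k p • x ^ k

namespace AbsSummable

variable {p q : PowerSeries ℂ}

lemma summable (hp : AbsSummable p) : Summable fun k => ‖PowerSeries.coeff k p‖ := hp

lemma wienerNorm_nonneg (p : PowerSeries ℂ) : 0 ≤ wienerNorm p :=
  tsum_nonneg fun _ => norm_nonneg _

lemma norm_coeff_mul_le (p q : PowerSeries ℂ) (k : ℕ) :
    ‖PowerSeries.coeff k (p * q)‖ ≤ ∑ ij ∈ Finset.HasAntidiagonal.antidiagonal k,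
      ‖PowerSeries.coeff ij.1 p‖ * ‖PowerSeries.coeff ij.2 q‖ := by
  rw [PowerSeries.coeff_mul]
  refine (norm_sum_le _ _).trans (Finset.sum_le_sum fun ij _ => ?_)
  rw [norm_mul]

lemma mul (hp : AbsSummable p) (hq : AbsSummable q) : AbsSummable (p * q) := by
  have h := summable_norm_sum_mul_antidiagonal_of_summable_norm
    (f := fun k => ‖PowerSeries.coeff k p‖) (g := fun k => ‖PowerSeries.coeff k q‖)
    (by simpa using hp.summable) (by simpa using hq.summable)
  exact Summable.of_nonneg_of_le (fun _ => norm_nonneg _)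
    (fun k => norm_coeff_mul_le p q k) h.of_norm

lemma wienerNorm_mul_le (hp : AbsSummable p) (hq : AbsSummable q) :
    wienerNorm (p * q) ≤ wienerNorm p * wienerNorm q := by
  have h := summable_norm_sum_mul_antidiagonal_of_summable_norm
    (f := fun k => ‖PowerSeries.coeff k p‖) (g := fun k => ‖PowerSeries.coeff k q‖)
    (by simpa using hp.summable) (by simpa using hq.summable)
  unfold wienerNorm
  rw [tsum_mul_tsum_eq_tsum_sum_antidiagonal_of_summable_norm
    (by simpa using hp.summable) (by simpa using hq.summable)]
  exact (hp.mul hq).summable.tsum_le_tsum (fun k => norm_coeff_mul_le p q k) h.of_norm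

lemma sub (hp : AbsSummable p) (hq : AbsSummable q) : AbsSummable (p - q) := by
  refine Summable.of_nonneg_of_le (fun _ => norm_nonneg _) (fun k => ?_) (hp.summable.add hq.summable)
  rw [map_sub]
  exact norm_sub_le _ _

lemma one : AbsSummable 1 := by
  refine summable_of_ne_finset_zero (s := {0}) fun k hk => ?_
  have : k ≠ 0 := by simpa using hk
  simp [PowerSeries.coeff_one, this]

lemma wienerNorm_one : wienerNorm 1 = 1 := by
  unfold wienerNorm
  rw [tsum_eq_single 0 fun k hk => by simp [PowerSeries.coeff_one, hk]]
  simp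

lemma C (a : ℂ) : AbsSummable (PowerSeries.C a) := by
  refine summable_of_ne_finset_zero (s := {0}) fun k hk => ?_
  have : k ≠ 0 := by simpa using hk
  rw [PowerSeries.coeff_C, if_neg this, norm_zero]

lemma pow (hp : AbsSummable p) (n : ℕ) : AbsSummable (p ^ n) := by
  induction n with
  | zero => simpa using one
  | succ n ih => rw [pow_succ]; exact ih.mul hp

lemma wienerNorm_pow_le_one (hp : AbsSummable p) (h1 : wienerNorm p ≤ 1) (n : ℕ) :
    wienerNorm (p ^ n) ≤ 1 := by
  induction n with
  | zero => simp [wienerNorm_one]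
  | succ n ih =>
    rw [pow_succ]
    exact ((hp.pow n).wienerNorm_mul_le hp).trans (mul_le_one₀ ih (wienerNorm_nonneg _) h1)

end AbsSummable

section evalSeries

variable {A : Type*} [NormedRing A] [NormedAlgebra ℂ A] {p q : PowerSeries ℂ}
  {x : A} {M : ℝ}

lemma norm_coeff_smul_pow_le (hx : ∀ n : ℕ, ‖x ^ n‖ ≤ M) (p : PowerSeries ℂ) (k : ℕ) :
    ‖PowerSeries.coeff k p • x ^ k‖ ≤ ‖PowerSeries.coeff k p‖ * M := by
  rw [norm_smul]
  exact mul_le_mul_of_nonneg_left (hx k) (norm_nonneg _)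

lemma summable_norm_evalSeries (hx : ∀ n : ℕ, ‖x ^ n‖ ≤ M) (hp : AbsSummable p) :
    Summable fun k => ‖PowerSeries.coeff k p • x ^ k‖ := by
  have h := hp.summable.mul_right M
  exact Summable.of_nonneg_of_le (fun _ => norm_nonneg _)
    (fun k => norm_coeff_smul_pow_le hx p k) h

lemma norm_evalSeries_le (hx : ∀ n : ℕ, ‖x ^ n‖ ≤ M) (hp : AbsSummable p) :
    ‖evalSeries p x‖ ≤ wienerNorm p * M := by
  have h := norm_tsum_le_tsum_norm (f := fun k => PowerSeries.coeff k p • x ^ k)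
    (summable_norm_evalSeries hx hp)
  unfold wienerNorm evalSeries
  refine h.trans ?_
  rw [← tsum_mul_right]
  exact (summable_norm_evalSeries hx hp).tsum_le_tsum (norm_coeff_smul_pow_le hx p)
    (hp.summable.mul_right M)

lemma evalSeries_one : evalSeries 1 x = 1 := by
  unfold evalSeries
  rw [tsum_eq_single 0 fun k hk => by simp [PowerSeries.coeff_one, hk]]
  simp

lemma evalSeries_C (a : ℂ) : evalSeries (PowerSeries.C a) x = algebraMap ℂ A a := by
  unfold evalSeries
  rw [tsum_eq_single 0 fun k hk => by rw [PowerSeries.coeff_C, if_neg hk, zero_smul]]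
  simp [Algebra.smul_def]

variable [CompleteSpace A]

lemma evalSeries_mul (hx : ∀ n : ℕ, ‖x ^ n‖ ≤ M) (hp : AbsSummable p) (hq : AbsSummable q) :
    evalSeries (p * q) x = evalSeries p x * evalSeries q x := by
  unfold evalSeries
  rw [tsum_mul_tsum_eq_tsum_sum_antidiagonal_of_summable_norm
    (summable_norm_evalSeries hx hp) (summable_norm_evalSeries hx hq)]
  refine tsum_congr fun k => ?_
  rw [PowerSeries.coeff_mul, Finset.sum_smul]
  refine Finset.sum_congr rfl fun ij hij => ?_
  rw [smul_mul_smul_comm, ← pow_add, Finset.HasAntidiagonal.mem_antidiagonal.1 hij]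

lemma evalSeries_sub (hx : ∀ n : ℕ, ‖x ^ n‖ ≤ M) (hp : AbsSummable p) (hq : AbsSummable q) :
    evalSeries (p - q) x = evalSeries p x - evalSeries q x := by
  unfold evalSeries
  rw [← (summable_norm_evalSeries hx hp).of_norm.tsum_sub
    (summable_norm_evalSeries hx hq).of_norm]
  exact tsum_congr fun k => by rw [map_sub, sub_smul]

lemma evalSeries_pow (hx : ∀ n : ℕ, ‖x ^ n‖ ≤ M) (hp : AbsSummable p) (n : ℕ) :
    evalSeries (p ^ n) x = evalSeries p x ^ n := by
  induction n with
  | zero => simp [evalSeries_one]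
  | succ n ih => rw [pow_succ, evalSeries_mul hx (hp.pow n) hp, ih, pow_succ]

/-- The composition `P ∘ Q` of power series, with coefficients given by infinite sums. These
converge if `P` is absolutely summable and `Q` has `ℓ¹` norm at most `1`. -/
noncomputable def compSeries (P Q : PowerSeries ℂ) : PowerSeries ℂ :=
  PowerSeries.mk fun k => ∑' m, PowerSeries.coeff m P * PowerSeries.coeff k (Q ^ m)

lemma summable_prod_norm_coeff (hp : AbsSummable p) (hq : AbsSummable q)
    (hq1 : wienerNorm q ≤ 1) : Summable fun mk : ℕ × ℕ =>
    ‖PowerSeries.coeff mk.1 p‖ * ‖PowerSeries.coeff mk.2 (q ^ mk.1)‖ := by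
  refine (summable_prod_of_nonneg fun mk => ?_).2 ⟨?_, ?_⟩
  · exact mul_nonneg (norm_nonneg _) (norm_nonneg _)
  · intro m
    have h := (hq.pow m).summable
    exact h.mul_left ‖PowerSeries.coeff m p‖
  · have h := hp.summable
    refine Summable.of_nonneg_of_le (fun m => ?_) (fun m => ?_) h
    · exact tsum_nonneg fun k => mul_nonneg (norm_nonneg _) (norm_nonneg _)
    simp only [tsum_mul_left]
    exact mul_le_of_le_one_right (norm_nonneg _) (hq.wienerNorm_pow_le_one hq1 m)

lemma absSummable_compSeries (hp : AbsSummable p) (hq : AbsSummable q)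
    (hq1 : wienerNorm q ≤ 1) : AbsSummable (compSeries p q) := by
  have h0 := (summable_prod_norm_coeff hp hq hq1).prod_symm
  have h1 := h0.prod
  refine Summable.of_nonneg_of_le (fun k => norm_nonneg _) (fun k => ?_) h1
  rw [compSeries, PowerSeries.coeff_mk]
  have h2 := h0.prod_factor k
  simp only [Prod.swap_prod_mk, ← norm_mul] at h2 ⊢
  exact norm_tsum_le_tsum_norm
    (f := fun m => PowerSeries.coeff m p * PowerSeries.coeff k (q ^ m)) h2

lemma evalSeries_evalSeries (hx : ∀ n : ℕ, ‖x ^ n‖ ≤ M) (hp : AbsSummable p)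
    (hq : AbsSummable q) (hq1 : wienerNorm q ≤ 1) :
    evalSeries p (evalSeries q x) = evalSeries (compSeries p q) x := by
  have hM : 0 ≤ M := (norm_nonneg _).trans (hx 0)
  have hs : Summable fun mk : ℕ × ℕ =>
      (PowerSeries.coeff mk.1 p * PowerSeries.coeff mk.2 (q ^ mk.1)) • x ^ mk.2 := by
    have h0 := summable_prod_norm_coeff hp hq hq1
    refine Summable.of_norm_bounded (h0.mul_right M) fun mk => ?_
    rw [norm_smul, norm_mul]
    exact mul_le_mul_of_nonneg_left (hx _) (by positivity)
  have hs' : ∀ k, Summable fun m => PowerSeries.coeff m p * PowerSeries.coeff k (q ^ m) := by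
    intro k
    refine Summable.of_norm_bounded hp.summable fun m => ?_
    rw [norm_mul]
    refine mul_le_of_le_one_right (norm_nonneg _) ?_
    exact ((hq.pow m).summable.le_tsum k fun _ _ => norm_nonneg _).trans (hq.wienerNorm_pow_le_one hq1 m)
  calc evalSeries p (evalSeries q x)
      = ∑' m, ∑' k, (PowerSeries.coeff m p * PowerSeries.coeff k (q ^ m)) • x ^ k := by
        refine tsum_congr fun m => ?_
        have h := (summable_norm_evalSeries hx (hq.pow m)).of_norm.tsum_const_smul
          (PowerSeries.coeff m p)
        rw [← evalSeries_pow hx hq, evalSeries, ← h]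
        exact tsum_congr fun k => smul_smul _ _ _
    _ = ∑' k, ∑' m, (PowerSeries.coeff m p * PowerSeries.coeff k (q ^ m)) • x ^ k :=
        Eq.symm <| Summable.tsum_comm (f := fun m k =>
          (PowerSeries.coeff m p * PowerSeries.coeff k (q ^ m)) • x ^ k) hs
    _ = evalSeries (compSeries p q) x := by
        refine tsum_congr fun k => ?_
        have h := (hs' k).tsum_smul_const (x ^ k)
        rw [compSeries, PowerSeries.coeff_mk, h]

end evalSeries

/-! ### The binomial series and the coefficients of `1 - (1 - z) ^ α` -/

/-- The Taylor series of `(1 - z) ^ γ` at the origin. -/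
noncomputable def binomSeries (γ : ℝ) : PowerSeries ℂ :=
  PowerSeries.mk fun k => (-1) ^ k * Ring.choose (γ : ℂ) k

/-- The Taylor series `∑_{k ≥ 1} a_{α,k} zᵏ` of `1 - (1 - z) ^ α` at the origin. -/
noncomputable def fracSeries (α : ℝ) : PowerSeries ℂ := 1 - binomSeries α

lemma ringChoose_eq_prod_div (a : ℂ) (k : ℕ) :
    Ring.choose a k = (∏ i ∈ Finset.range k, (a - i)) / (Nat.factorial k) := by
  have h : (descPochhammer ℤ k).smeval a = ∏ i ∈ Finset.range k, (a - i) := by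
    induction k with
    | zero => simp
    | succ k ih =>
      rw [descPochhammer_succ_right, Polynomial.smeval_mul, ih, Finset.prod_range_succ]
      simp [Polynomial.smeval_natCast]
  rw [Ring.choose_eq_smul, h, smul_eq_mul, div_eq_inv_mul]

lemma coeff_succ_fracSeries (α : ℝ) (k : ℕ) :
    PowerSeries.coeff (k + 1) (fracSeries α) = (aCoef α (k + 1) : ℂ) := by
  rw [fracSeries, map_sub, binomSeries, PowerSeries.coeff_mk, ringChoose_eq_prod_div, aCoef,
    PowerSeries.coeff_one, if_neg (Nat.succ_ne_zero k)]
  push_cast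
  rw [pow_succ]
  ring

lemma coeff_zero_fracSeries (α : ℝ) : PowerSeries.coeff 0 (fracSeries α) = 0 := by
  simp [fracSeries, binomSeries]

lemma coeff_succ_binomSeries (γ : ℝ) (k : ℕ) :
    PowerSeries.coeff (k + 1) (binomSeries γ) * (k + 1) =
      -γ * PowerSeries.coeff k (binomSeries (γ - 1)) := by
  rw [binomSeries, PowerSeries.coeff_mk, binomSeries, PowerSeries.coeff_mk,
    ringChoose_eq_prod_div, ringChoose_eq_prod_div, Finset.prod_range_succ', Nat.factorial_succ]
  have h1 : ((k : ℂ) + 1) ≠ 0 := by exact_mod_cast Nat.succ_ne_zero k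
  have h2 : (Nat.factorial k : ℂ) ≠ 0 := by exact_mod_cast Nat.factorial_ne_zero k
  have h3 : ∏ i ∈ Finset.range k, ((γ : ℂ) - ((i + 1 : ℕ) : ℂ)) =
      ∏ i ∈ Finset.range k, (((γ - 1 : ℝ) : ℂ) - i) :=
    Finset.prod_congr rfl fun i _ => by push_cast; ring
  rw [h3]
  push_cast
  field_simp
  ring

lemma derivative_fracSeries (α : ℝ) :
    PowerSeries.derivative ℂ (fracSeries α) = PowerSeries.C (α : ℂ) * binomSeries (α - 1) := by
  ext k
  rw [PowerSeries.coeff_derivative, fracSeries, map_sub, PowerSeries.coeff_one,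
    if_neg (Nat.succ_ne_zero k), zero_sub, neg_mul, coeff_succ_binomSeries, PowerSeries.coeff_C_mul]
  ring

lemma hasSum_binomSeries (γ : ℝ) {z : ℂ} (hz : ‖z‖ < 1) :
    HasSum (fun k => PowerSeries.coeff k (binomSeries γ) * z ^ k) ((1 - z) ^ (γ : ℂ)) := by
  have h := (Complex.one_add_cpow_hasFPowerSeriesOnBall_zero (a := (γ : ℂ))).hasSum
    (y := -z) (by
      rw [← ENNReal.ofReal_one, Metric.eball_ofReal]
      simpa using hz)
  simp only [zero_add, binomialSeries_apply] at h
  rw [← sub_eq_add_neg] at h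
  convert! h using 1
  ext k
  rw [binomSeries, PowerSeries.coeff_mk]
  simp only [List.ofFn_const, List.prod_replicate, smul_eq_mul]
  rw [neg_pow z k]
  ring

/-- For `|r| < 1` the dilated series `z ↦ (1 - r z) ^ γ` is absolutely summable even if
`(1 - z) ^ γ` is unbounded on the disc. -/
lemma absSummable_rescale_binomSeries (γ : ℝ) {r : ℂ} (hr : ‖r‖ < 1) :
    AbsSummable (PowerSeries.rescale r (binomSeries γ)) := by
  have h := (hasSum_binomSeries γ hr).summable.norm
  unfold AbsSummable
  convert h using 2 with k
  rw [PowerSeries.coeff_rescale, mul_comm]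

lemma aCoef_succ_eq (α : ℝ) (k : ℕ) :
    aCoef α (k + 1) = α / (k + 1) * ∏ i ∈ Finset.range k, (1 - α / (i + 1)) := by
  induction k with
  | zero => simp [aCoef]
  | succ k ih =>
    have h1 : ((k : ℝ) + 1) ≠ 0 := by positivity
    have h2 : ((k : ℝ) + 1 + 1) ≠ 0 := by positivity
    have h : aCoef α (k + 1 + 1) = aCoef α (k + 1) * ((k + 1 - α) / (k + 1 + 1)) := by
      have h3 : (Nat.factorial (k + 1) : ℝ) ≠ 0 := by exact_mod_cast Nat.factorial_ne_zero _
      rw [aCoef, aCoef, Finset.prod_range_succ, Nat.factorial_succ (k + 1)]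
      simp only [Nat.add_sub_cancel]
      push_cast
      rw [pow_succ]
      field_simp
      ring
    rw [h, ih, Finset.prod_range_succ]
    push_cast
    field_simp

lemma sum_aCoef_succ (α : ℝ) (n : ℕ) :
    ∑ k ∈ Finset.range n, aCoef α (k + 1) = 1 - ∏ i ∈ Finset.range n, (1 - α / (i + 1)) := by
  induction n with
  | zero => simp
  | succ n ih =>
    rw [Finset.sum_range_succ, ih, aCoef_succ_eq, Finset.prod_range_succ]
    ring

lemma prod_one_sub_div_nonneg {α : ℝ} (h1 : α < 1) (n : ℕ) :
    0 ≤ ∏ i ∈ Finset.range n, (1 - α / ((i : ℝ) + 1)) := by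
  refine Finset.prod_nonneg fun i _ => ?_
  have : (0 : ℝ) ≤ i := Nat.cast_nonneg i
  rw [sub_nonneg, div_le_one (by positivity)]
  linarith

lemma aCoef_succ_nonneg {α : ℝ} (hα : α ∈ Set.Ioo (0 : ℝ) 1) (k : ℕ) : 0 ≤ aCoef α (k + 1) := by
  rw [aCoef_succ_eq]
  have := hα.1
  exact mul_nonneg (by positivity) (prod_one_sub_div_nonneg hα.2 k)

lemma sum_norm_coeff_fracSeries_le {α : ℝ} (hα : α ∈ Set.Ioo (0 : ℝ) 1) (n : ℕ) :
    ∑ k ∈ Finset.range n, ‖PowerSeries.coeff k (fracSeries α)‖ ≤ 1 := by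
  rcases n with _ | n
  · simp
  · rw [Finset.sum_range_succ', coeff_zero_fracSeries, norm_zero, add_zero]
    calc ∑ k ∈ Finset.range n, ‖PowerSeries.coeff (k + 1) (fracSeries α)‖
        = ∑ k ∈ Finset.range n, aCoef α (k + 1) := by
          refine Finset.sum_congr rfl fun k _ => ?_
          rw [coeff_succ_fracSeries, Complex.norm_real, Real.norm_of_nonneg (aCoef_succ_nonneg hα k)]
      _ ≤ 1 := by
          rw [sum_aCoef_succ]
          linarith [prod_one_sub_div_nonneg hα.2 n]

lemma absSummable_fracSeries {α : ℝ} (hα : α ∈ Set.Ioo (0 : ℝ) 1) :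
    AbsSummable (fracSeries α) :=
  summable_of_sum_range_le (fun _ => norm_nonneg _) (sum_norm_coeff_fracSeries_le hα)

lemma wienerNorm_fracSeries_le {α : ℝ} (hα : α ∈ Set.Ioo (0 : ℝ) 1) :
    wienerNorm (fracSeries α) ≤ 1 :=
  Real.tsum_le_of_sum_range_le (fun _ => norm_nonneg _) (sum_norm_coeff_fracSeries_le hα)

lemma fracPow_eq_evalSeries {X : Type*} [NormedAddCommGroup X] [NormedSpace ℂ X]
    [CompleteSpace X] {T : X →L[ℂ] X} {M : ℝ} (hT : ∀ n : ℕ, ‖T ^ n‖ ≤ M)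
    {α : ℝ} (hα : α ∈ Set.Ioo (0 : ℝ) 1) :
    fracPow α T = evalSeries (fracSeries α) T := by
  have h := (summable_norm_evalSeries hT (absSummable_fracSeries hα)).of_norm
  unfold evalSeries
  rw [h.tsum_eq_zero_add, coeff_zero_fracSeries, zero_smul, zero_add]
  simp only [coeff_succ_fracSeries]
  rfl

lemma hasSum_fracSeries (α : ℝ) {z : ℂ} (hz : ‖z‖ < 1) :
    HasSum (fun k => PowerSeries.coeff k (fracSeries α) * z ^ k) (1 - (1 - z) ^ (α : ℂ)) := by
  have h1 : HasSum (fun k => PowerSeries.coeff k (1 : PowerSeries ℂ) * z ^ k) 1 := by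
    convert hasSum_single (f := fun k => PowerSeries.coeff k (1 : PowerSeries ℂ) * z ^ k) 0
      fun k hk => by simp [PowerSeries.coeff_one, hk] using 1
    simp
  convert! h1.sub (hasSum_binomSeries α hz) using 1
  ext k
  rw [fracSeries, map_sub, sub_mul]

lemma norm_pow_le_one_of_norm_le_one {z : ℂ} (hz : ‖z‖ ≤ 1) (n : ℕ) : ‖z ^ n‖ ≤ 1 := by
  rw [norm_pow]
  exact pow_le_one₀ (norm_nonneg _) hz

/-! ### Geometry of `(1 - z) ^ α` on the disc -/

lemma rpow_cos_le_cos_mul {α φ : ℝ} (hα : α ∈ Set.Ioo (0 : ℝ) 1) (hφ : |φ| ≤ Real.pi / 2) :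
    Real.cos φ ^ α ≤ Real.cos (α * φ) := by
  have hφ' := abs_le.1 hφ
  have hc : 0 ≤ Real.cos φ := Real.cos_nonneg_of_mem_Icc ⟨hφ'.1, hφ'.2⟩
  have h1 := strictConcaveOn_cos_Icc.concaveOn.2 (x := φ) (y := 0) ⟨hφ'.1, hφ'.2⟩
    ⟨by linarith [Real.pi_pos], by linarith [Real.pi_pos]⟩ hα.1.le (sub_nonneg.2 hα.2.le)
    (by ring)
  simp only [smul_eq_mul, mul_zero, add_zero, Real.cos_zero, mul_one] at h1
  have h2 := Real.geom_mean_le_arith_mean2_weighted hα.1.le (sub_nonneg.2 hα.2.le) hc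
    zero_le_one (by ring)
  simp only [Real.one_rpow, mul_one] at h2
  exact h2.trans h1

/-- The constant `c` in the bound `|1 - (1 - z) ^ α|² ≤ 1 - c |1 - z| ^ α`. -/
noncomputable def sectorConst (α : ℝ) : ℝ := (2 - 2 ^ α) * Real.cos (α * (Real.pi / 2))

lemma sectorConst_pos {α : ℝ} (hα : α ∈ Set.Ioo (0 : ℝ) 1) : 0 < sectorConst α := by
  have h1 : (2 : ℝ) ^ α < 2 := by
    conv_rhs => rw [← Real.rpow_one 2]
    exact Real.rpow_lt_rpow_of_exponent_lt (by norm_num) hα.2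
  refine mul_pos (by linarith) (Real.cos_pos_of_mem_Ioo ⟨?_, ?_⟩)
  · nlinarith [Real.pi_pos, hα.1, hα.2]
  · nlinarith [Real.pi_pos, hα.1, hα.2]

/-- The values of `1 - (1 - z) ^ α` on the unit disc stay in a Stolz-type region at `1`. With
`w = 1 - z = ρ e^{iφ}` one has `ρ ≤ 2 cos φ`, and `cos φ ^ α ≤ cos (α φ)` gives
`ρ ^ (2 α) ≤ 2 ^ α ρ ^ α cos (α φ)`. -/
lemma norm_sq_one_sub_cpow_le {α : ℝ} (hα : α ∈ Set.Ioo (0 : ℝ) 1) {z : ℂ} (hz : ‖z‖ < 1) :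
    ‖1 - (1 - z) ^ (α : ℂ)‖ ^ 2 ≤ 1 - sectorConst α * ‖1 - z‖ ^ α := by
  set w : ℂ := 1 - z with hw
  have hzre : z.re < 1 := (Complex.re_le_norm z).trans_lt hz
  have hwre : 0 < w.re := by simp [hw]; linarith
  have hw0 : w ≠ 0 := fun h => by simp [h] at hwre
  have hρ : 0 < ‖w‖ := norm_pos_iff.2 hw0
  have harg : |w.arg| ≤ Real.pi / 2 := Complex.abs_arg_le_pi_div_two_iff.2 hwre.le
  have hcos : Real.cos w.arg = w.re / ‖w‖ := Complex.cos_arg hw0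
  -- the disc `‖1 - w‖ < 1` in polar coordinates
  have hdisc : ‖w‖ ≤ 2 * Real.cos w.arg := by
    have h1 : ‖z‖ ^ 2 < 1 := by nlinarith [norm_nonneg z]
    have h2 : z = 1 - w := by simp [hw]
    rw [← Complex.normSq_eq_norm_sq, h2, Complex.normSq_apply] at h1
    have h3 : ‖w‖ ^ 2 = w.re * w.re + w.im * w.im := by
      rw [← Complex.normSq_eq_norm_sq, Complex.normSq_apply]
    simp only [Complex.sub_re, Complex.one_re, Complex.sub_im, Complex.one_im] at h1
    rw [hcos, ← mul_div_assoc, le_div_iff₀ hρ]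
    nlinarith
  have hnorm : ‖w ^ (α : ℂ)‖ = ‖w‖ ^ α := Complex.norm_cpow_real w α
  have hre : (w ^ (α : ℂ)).re = ‖w‖ ^ α * Real.cos (α * w.arg) := by
    rw [Complex.cpow_ofReal_re, mul_comm w.arg α]
  have hexp : ‖1 - w ^ (α : ℂ)‖ ^ 2 =
      1 - 2 * (‖w‖ ^ α * Real.cos (α * w.arg)) + (‖w‖ ^ α) ^ 2 := by
    rw [← hre, ← hnorm, ← Complex.normSq_eq_norm_sq, ← Complex.normSq_eq_norm_sq,
      Complex.normSq_apply, Complex.normSq_apply]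
    simp only [Complex.sub_re, Complex.one_re, Complex.sub_im, Complex.one_im]
    ring
  have hx : 0 < ‖w‖ ^ α := Real.rpow_pos_of_pos hρ α
  have hcos0 : 0 ≤ Real.cos w.arg := by rw [hcos]; positivity
  have h1 : ‖w‖ ^ α ≤ 2 ^ α * Real.cos (α * w.arg) := by
    calc ‖w‖ ^ α ≤ (2 * Real.cos w.arg) ^ α := Real.rpow_le_rpow hρ.le hdisc hα.1.le
      _ = 2 ^ α * Real.cos w.arg ^ α := Real.mul_rpow (by norm_num) hcos0
      _ ≤ 2 ^ α * Real.cos (α * w.arg) :=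
          mul_le_mul_of_nonneg_left (rpow_cos_le_cos_mul hα harg) (by positivity)
  have h2 : Real.cos (α * (Real.pi / 2)) ≤ Real.cos (α * w.arg) := by
    rw [← Real.cos_abs (α * w.arg), abs_mul, abs_of_pos hα.1]
    refine Real.cos_le_cos_of_nonneg_of_le_pi (mul_nonneg hα.1.le (abs_nonneg _)) ?_ ?_
    · nlinarith [Real.pi_pos, hα.1, hα.2]
    · exact mul_le_mul_of_nonneg_left harg hα.1.le
  have h3 : (0 : ℝ) ≤ 2 - 2 ^ α := by
    have : (2 : ℝ) ^ α ≤ 2 ^ (1 : ℝ) :=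
      Real.rpow_le_rpow_of_exponent_le (by norm_num) hα.2.le
    rw [Real.rpow_one] at this
    linarith
  rw [hexp, sectorConst]
  nlinarith [mul_le_mul_of_nonneg_left h1 hx.le,
    mul_le_mul_of_nonneg_right (mul_le_mul_of_nonneg_left h2 h3) hx.le]

/-! ### Composition of fractional powers -/

lemma evalSeries_fracSeries (α : ℝ) {z : ℂ} (hz : ‖z‖ < 1) :
    evalSeries (fracSeries α) z = 1 - (1 - z) ^ (α : ℂ) := by
  simpa only [evalSeries, smul_eq_mul] using (hasSum_fracSeries α hz).tsum_eq

lemma norm_evalSeries_fracSeries_lt_one {α : ℝ} (hα : α ∈ Set.Ioo (0 : ℝ) 1) {z : ℂ}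
    (hz : ‖z‖ < 1) : ‖evalSeries (fracSeries α) z‖ < 1 := by
  have h := norm_sq_one_sub_cpow_le hα hz
  rw [← evalSeries_fracSeries α hz] at h
  have hw : 0 < ‖1 - z‖ := by
    refine norm_pos_iff.2 fun h0 => ?_
    have : z = 1 := (sub_eq_zero.1 h0).symm
    simp [this] at hz
  have := mul_pos (sectorConst_pos hα) (Real.rpow_pos_of_pos hw α)
  nlinarith [norm_nonneg (evalSeries (fracSeries α) z)]

lemma compSeries_fracSeries {β γ : ℝ} (hβ : β ∈ Set.Ioo (0 : ℝ) 1) (hγ : γ ∈ Set.Ioo (0 : ℝ) 1) :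
    compSeries (fracSeries β) (fracSeries γ) = fracSeries (β * γ) := by
  set Q := compSeries (fracSeries β) (fracSeries γ) with hQ
  have hsb := absSummable_fracSeries hβ
  have hsg := absSummable_fracSeries hγ
  have hQs : AbsSummable Q := absSummable_compSeries hsb hsg (wienerNorm_fracSeries_le hγ)
  have key : ∀ z : ℂ, ‖z‖ < 1 → evalSeries Q z = evalSeries (fracSeries (β * γ)) z := by
    intro z hz
    have hzb : ∀ n : ℕ, ‖z ^ n‖ ≤ 1 := norm_pow_le_one_of_norm_le_one hz.le
    have hwre : 0 < (1 - z).re := by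
      have hzre : z.re < 1 := (Complex.re_le_norm z).trans_lt hz
      simp; linarith
    have hw0 : 1 - z ≠ 0 := fun h => by simp [h] at hwre
    rw [hQ, ← evalSeries_evalSeries hzb hsb hsg (wienerNorm_fracSeries_le hγ),
      evalSeries_fracSeries β (norm_evalSeries_fracSeries_lt_one hγ hz),
      evalSeries_fracSeries γ hz, evalSeries_fracSeries (β * γ) hz, sub_sub_cancel]
    have him : (Complex.log (1 - z) * (γ : ℂ)).im = (1 - z).arg * γ := by
      simp [Complex.mul_im, Complex.log_im]
    have harg := abs_le.1 (Complex.abs_arg_le_pi_div_two_iff.2 hwre.le)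
    have hpi := Real.pi_pos
    rw [← Complex.cpow_mul (y := (γ : ℂ)) (β : ℂ)]
    · push_cast
      rw [mul_comm (γ : ℂ)]
    · rw [him]; nlinarith [hγ.1, hγ.2]
    · rw [him]; nlinarith [hγ.1, hγ.2]
  -- uniqueness of Taylor coefficients
  have hfps : ∀ P : PowerSeries ℂ, AbsSummable P → HasFPowerSeriesAt (evalSeries P : ℂ → ℂ)
      (FormalMultilinearSeries.ofScalars ℂ fun k => PowerSeries.coeff k P) 0 := by
    intro P hP
    rw [hasFPowerSeriesAt_iff]
    filter_upwards [Metric.ball_mem_nhds (0 : ℂ) one_pos] with z hz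
    have hz1 : ‖z‖ < 1 := by simpa using hz
    have h := (summable_norm_evalSeries (norm_pow_le_one_of_norm_le_one hz1.le) hP).of_norm.hasSum
    rw [zero_add]
    convert! h using 1
    ext k
    simp [FormalMultilinearSeries.coeff_ofScalars, mul_comm]
  have hβγ : β * γ ∈ Set.Ioo (0 : ℝ) 1 :=
    ⟨mul_pos hβ.1 hγ.1, mul_lt_one_of_nonneg_of_lt_one_left hβ.1.le hβ.2 hγ.2.le⟩
  have h := (hfps Q hQs).eq_formalMultilinearSeries_of_eventually
    (hfps _ (absSummable_fracSeries hβγ)) (by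
      filter_upwards [Metric.ball_mem_nhds (0 : ℂ) one_pos] with z hz
      exact key z (by simpa using hz))
  ext k
  have hk := congrArg (fun s => s.coeff k) h
  simpa [FormalMultilinearSeries.coeff_ofScalars] using hk

lemma fracPow_fracPow {X : Type*} [NormedAddCommGroup X] [NormedSpace ℂ X]
    [CompleteSpace X] {T : X →L[ℂ] X} {M : ℝ} (hT : ∀ n : ℕ, ‖T ^ n‖ ≤ M)
    {β γ : ℝ} (hβ : β ∈ Set.Ioo (0 : ℝ) 1) (hγ : γ ∈ Set.Ioo (0 : ℝ) 1) :
    fracPow β (fracPow γ T) = fracPow (β * γ) T := by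
  have hβγ : β * γ ∈ Set.Ioo (0 : ℝ) 1 :=
    ⟨mul_pos hβ.1 hγ.1, mul_lt_one_of_nonneg_of_lt_one_left hβ.1.le hβ.2 hγ.2.le⟩
  have hsg := absSummable_fracSeries hγ
  rw [fracPow_eq_evalSeries hT hγ, fracPow_eq_evalSeries hT hβγ,
    fracPow_eq_evalSeries (M := 1 * M) _ hβ,
    evalSeries_evalSeries hT (absSummable_fracSeries hβ) hsg (wienerNorm_fracSeries_le hγ),
    compSeries_fracSeries hβ hγ]
  intro n
  rw [← evalSeries_pow hT hsg]
  exact (norm_evalSeries_le hT (hsg.pow n)).trans (mul_le_mul_of_nonneg_right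
    (hsg.wienerNorm_pow_le_one (wienerNorm_fracSeries_le hγ) n) ((norm_nonneg _).trans (hT 0)))

/-! ### From `L²` bounds on the circle to `ℓ¹` bounds on coefficients -/

open MeasureTheory in
/-- Bessel's inequality for absolutely summable power series on the unit circle. -/
lemma sum_sq_norm_coeff_le {p : PowerSeries ℂ} (hp : AbsSummable p) (N : ℕ) :
    ∑ k ∈ Finset.range N, ‖PowerSeries.coeff k p‖ ^ 2 ≤
      (2 * Real.pi)⁻¹ * ∫ θ in -Real.pi..Real.pi,
        ‖evalSeries p (Complex.exp (θ * Complex.I))‖ ^ 2 := by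
  have heval : ∀ (m : ℕ) (z : ℂ), (PowerSeries.trunc m p).eval z =
      ∑ k ∈ Finset.range m, PowerSeries.coeff k p * z ^ k := fun m z => by
    rw [Polynomial.eval, PowerSeries.eval₂_trunc_eq_sum_range]
    simp
  have hcirc : ∀ (θ : ℝ) (n : ℕ), ‖Complex.exp (θ * Complex.I) ^ n‖ ≤ 1 := fun θ =>
    norm_pow_le_one_of_norm_le_one (Complex.norm_exp_ofReal_mul_I θ).le
  have hparseval : ∀ m : ℕ, ∑ k ∈ Finset.range m, ‖PowerSeries.coeff k p‖ ^ 2 =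
      (2 * Real.pi)⁻¹ * ∫ θ in (0 : ℝ)..2 * Real.pi,
        ‖(PowerSeries.trunc m p).eval (Complex.exp (θ * Complex.I))‖ ^ 2 := by
    intro m
    have h := Polynomial.sum_sq_norm_coeff_eq_circleAverage (PowerSeries.trunc m p)
    simp only [Real.circleAverage, circleMap, zero_add, Complex.ofReal_one, one_mul,
      smul_eq_mul] at h
    rw [← h]
    symm
    calc ∑ i ∈ (PowerSeries.trunc m p).support, ‖(PowerSeries.trunc m p).coeff i‖ ^ 2
        = ∑ i ∈ Finset.range m, ‖(PowerSeries.trunc m p).coeff i‖ ^ 2 := by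
          refine Finset.sum_subset (fun i hi => ?_) fun i _ hi => ?_
          · by_contra hm
            rw [Polynomial.mem_support_iff, PowerSeries.coeff_trunc,
              if_neg (by simpa using hm)] at hi
            exact hi rfl
          · rw [Polynomial.notMem_support_iff.1 hi]
            simp
      _ = _ := Finset.sum_congr rfl fun i hi => by
          rw [PowerSeries.coeff_trunc, if_pos (Finset.mem_range.1 hi)]
  have hper : ∫ θ in -Real.pi..Real.pi, ‖evalSeries p (Complex.exp (θ * Complex.I))‖ ^ 2 =
      ∫ θ in (0 : ℝ)..2 * Real.pi, ‖evalSeries p (Complex.exp (θ * Complex.I))‖ ^ 2 := by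
    have hP : Function.Periodic
        (fun θ : ℝ => ‖evalSeries p (Complex.exp (θ * Complex.I))‖ ^ 2) (2 * Real.pi) := by
      intro θ
      have : Complex.exp (((θ + 2 * Real.pi : ℝ) : ℂ) * Complex.I) =
          Complex.exp (θ * Complex.I) := by
        push_cast
        rw [add_mul]
        exact Complex.exp_periodic _
      simp only [this]
    have h := hP.intervalIntegral_add_eq (-Real.pi) 0
    rwa [show -Real.pi + 2 * Real.pi = Real.pi by ring, zero_add] at h
  rw [hper]
  have hlim : Filter.Tendsto (fun m : ℕ => ∫ θ in (0 : ℝ)..2 * Real.pi,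
      ‖(PowerSeries.trunc m p).eval (Complex.exp (θ * Complex.I))‖ ^ 2) Filter.atTop
      (nhds (∫ θ in (0 : ℝ)..2 * Real.pi,
        ‖evalSeries p (Complex.exp (θ * Complex.I))‖ ^ 2)) := by
    refine intervalIntegral.tendsto_integral_filter_of_dominated_convergence
      (fun _ => wienerNorm p ^ 2) ?_ ?_ ?_ ?_
    · refine Filter.Eventually.of_forall fun m => Continuous.aestronglyMeasurable ?_
      fun_prop
    · refine Filter.Eventually.of_forall fun m => Filter.Eventually.of_forall fun θ _ => ?_
      rw [norm_pow, norm_norm, heval]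
      refine pow_le_pow_left₀ (norm_nonneg _) ((norm_sum_le _ _).trans ?_) 2
      refine le_trans (Finset.sum_le_sum fun k _ => ?_)
        (hp.summable.sum_le_tsum (Finset.range m) fun _ _ => norm_nonneg _)
      rw [norm_mul]
      exact mul_le_of_le_one_right (norm_nonneg _) (hcirc θ k)
    · exact intervalIntegrable_const
    · refine Filter.Eventually.of_forall fun θ _ => ?_
      have h := (summable_norm_evalSeries (hcirc θ) hp).of_norm.hasSum.tendsto_sum_nat
      simp only [heval]
      exact (h.norm).pow 2
  refine ge_of_tendsto (hlim.const_mul (2 * Real.pi)⁻¹) ?_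
  filter_upwards [Filter.eventually_ge_atTop N] with m hm
  rw [← hparseval m]
  exact Finset.sum_le_sum_of_subset_of_nonneg (Finset.range_subset_range.2 hm)
    fun _ _ _ => by positivity

lemma sum_inv_sq_add_le {L : ℝ} (hL : 1 ≤ L) (N : ℕ) :
    ∑ k ∈ Finset.range (N + 1), ((L + k)⁻¹) ^ 2 ≤ 2 / L - 1 / (L + N) := by
  induction N with
  | zero =>
    simp only [zero_add, Finset.sum_range_one, Nat.cast_zero, add_zero]
    have : L⁻¹ ≤ 1 := inv_le_one_of_one_le₀ hL
    have h0 : 0 < L⁻¹ := by positivity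
    rw [div_eq_mul_inv, div_eq_mul_inv]
    nlinarith
  | succ N ih =>
    rw [Finset.sum_range_succ]
    have hN : 0 < L + N := by positivity
    have : ((L + (N + 1 : ℕ))⁻¹) ^ 2 ≤ 1 / (L + N) - 1 / (L + (N + 1 : ℕ)) := by
      push_cast
      rw [div_sub_div _ _ hN.ne' (by positivity), inv_pow, inv_eq_one_div,
        div_le_div_iff₀ (by positivity) (by positivity)]
      nlinarith
    linarith

/-- A discrete form of Carlson's inequality: a sequence whose weighted `ℓ²` norms are balanced at
the scale `L` is controlled in `ℓ¹` independently of `L`. -/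
lemma sum_le_sqrt_of_sq_bounds {d : ℕ → ℝ} {A L : ℝ} (hL : 1 ≤ L)
    (h0 : ∀ N, ∑ k ∈ Finset.range N, d k ^ 2 ≤ A / L)
    (h1 : ∀ N, ∑ k ∈ Finset.range N, (d (k + 1) * (k + 1)) ^ 2 ≤ A * L) (N : ℕ) :
    ∑ k ∈ Finset.range N, d k ≤ Real.sqrt (8 * A) := by
  have hL0 : 0 < L := by linarith
  have hA : 0 ≤ A := by
    have := h1 0
    simp only [Finset.range_zero, Finset.sum_empty] at this
    nlinarith
  rcases N with _ | N
  · simp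
  refine Real.le_sqrt_of_sq_le ?_
  have hCS := Finset.sum_mul_sq_le_sq_mul_sq (Finset.range (N + 1))
    (fun k : ℕ => (L + k) * d k) (fun k : ℕ => (L + k)⁻¹)
  have hs : ∑ k ∈ Finset.range (N + 1), (L + k) * d k * (L + k)⁻¹ =
      ∑ k ∈ Finset.range (N + 1), d k := by
    refine Finset.sum_congr rfl fun k _ => ?_
    have : L + (k : ℝ) ≠ 0 := by positivity
    field_simp
  rw [hs] at hCS
  have hb : ∑ k ∈ Finset.range (N + 1), ((L + k)⁻¹) ^ 2 ≤ 2 / L := by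
    have : (0 : ℝ) ≤ 1 / (L + N) := by positivity
    linarith [sum_inv_sq_add_le hL N]
  have ha : ∑ k ∈ Finset.range (N + 1), ((L + k) * d k) ^ 2 ≤ 4 * A * L := by
    have h2 : ∑ k ∈ Finset.range (N + 1), (d k * k) ^ 2 ≤ A * L := by
      rw [Finset.sum_range_succ']
      simpa using h1 N
    have h3 : L ^ 2 * ∑ k ∈ Finset.range (N + 1), d k ^ 2 ≤ A * L := by
      calc L ^ 2 * ∑ k ∈ Finset.range (N + 1), d k ^ 2 ≤ L ^ 2 * (A / L) :=
            mul_le_mul_of_nonneg_left (h0 _) (by positivity)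
        _ = A * L := by field_simp
    calc ∑ k ∈ Finset.range (N + 1), ((L + k) * d k) ^ 2
        ≤ ∑ k ∈ Finset.range (N + 1), (2 * (L ^ 2 * d k ^ 2) + 2 * (d k * k) ^ 2) := by
          refine Finset.sum_le_sum fun k _ => ?_
          nlinarith [sq_nonneg (L * d k - d k * k)]
      _ = 2 * (L ^ 2 * ∑ k ∈ Finset.range (N + 1), d k ^ 2) +
          2 * ∑ k ∈ Finset.range (N + 1), (d k * k) ^ 2 := by
          rw [Finset.sum_add_distrib, ← Finset.mul_sum, ← Finset.mul_sum, ← Finset.mul_sum]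
      _ ≤ 4 * A * L := by linarith
  calc (∑ k ∈ Finset.range (N + 1), d k) ^ 2
      ≤ (4 * A * L) * (2 / L) := hCS.trans (mul_le_mul ha hb
        (Finset.sum_nonneg fun _ _ => by positivity) (by positivity))
    _ = 8 * A := by field_simp; ring

open MeasureTheory in
/-- The bound is the integral of the majorant over the whole real line, a value of the Gamma
function. -/
lemma integral_le_of_le_rpow_mul_exp {h : ℝ → ℝ} {s β b A : ℝ} (hs : -1 < s) (hβ : 0 < β)
    (hb : 0 < b) (hA : 0 ≤ A) (h0 : ∀ θ, 0 ≤ h θ)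
    (hle : ∀ θ, |θ| ≤ Real.pi → θ ≠ 0 → h θ ≤ A * (|θ| ^ s * Real.exp (-b * |θ| ^ β))) :
    ∫ θ in -Real.pi..Real.pi, h θ ≤
      A * (2 * (b ^ (-(s + 1) / β) * (1 / β) * Real.Gamma ((s + 1) / β))) := by
  have hmaj_Ioi : IntegrableOn (fun θ : ℝ => |θ| ^ s * Real.exp (-b * |θ| ^ β)) (Set.Ioi 0) := by
    refine (integrableOn_rpow_mul_exp_neg_mul_rpow hs hβ hb).congr_fun (fun θ hθ => ?_)
      measurableSet_Ioi
    simp only [abs_of_pos (Set.mem_Ioi.1 hθ)]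
  have hmaj_Iic : IntegrableOn (fun θ : ℝ => |θ| ^ s * Real.exp (-b * |θ| ^ β)) (Set.Iic 0) := by
    have hneg : MeasurableEmbedding (Neg.neg : ℝ → ℝ) := (Homeomorph.neg ℝ).measurableEmbedding
    rw [← Measure.map_neg_eq_self (volume : Measure ℝ), hneg.integrableOn_map_iff]
    have h := (integrableOn_Ici_iff_integrableOn_Ioi (by finiteness)).2 hmaj_Ioi
    simpa [Function.comp_def] using h
  have hmaj : Integrable fun θ : ℝ => |θ| ^ s * Real.exp (-b * |θ| ^ β) := by
    rw [← integrableOn_univ, ← Set.Iic_union_Ioi (a := (0 : ℝ))]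
    exact hmaj_Iic.union hmaj_Ioi
  have hval : ∫ θ : ℝ, |θ| ^ s * Real.exp (-b * |θ| ^ β) =
      2 * (b ^ (-(s + 1) / β) * (1 / β) * Real.Gamma ((s + 1) / β)) := by
    rw [integral_comp_abs (f := fun θ : ℝ => θ ^ s * Real.exp (-b * θ ^ β)),
      integral_rpow_mul_exp_neg_mul_rpow hβ hs hb]
  rw [intervalIntegral.integral_of_le (by linarith [Real.pi_pos]), ← hval, ← integral_const_mul]
  calc ∫ θ in Set.Ioc (-Real.pi) Real.pi, h θ
      ≤ ∫ θ in Set.Ioc (-Real.pi) Real.pi, A * (|θ| ^ s * Real.exp (-b * |θ| ^ β)) := by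
        refine integral_mono_of_nonneg (Filter.Eventually.of_forall h0)
          (hmaj.const_mul A).integrableOn ?_
        have hne : ∀ᵐ θ ∂(volume.restrict (Set.Ioc (-Real.pi) Real.pi)), θ ≠ (0 : ℝ) :=
          ae_restrict_of_ae (Measure.ae_ne volume 0)
        filter_upwards [hne, ae_restrict_mem measurableSet_Ioc] with θ hθ hm
        exact hle θ (abs_le.2 ⟨hm.1.le, hm.2⟩) hθ
    _ ≤ ∫ θ, A * (|θ| ^ s * Real.exp (-b * |θ| ^ β)) :=
        setIntegral_le_integral (hmaj.const_mul A)
          (Filter.Eventually.of_forall fun θ => by positivity)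

/-! ### Pointwise bounds on circles inside the disc -/

lemma norm_one_sub_ge {r θ : ℝ} (hr : 1 / 2 ≤ r) (hθ : |θ| ≤ Real.pi) :
    |θ| / 4 ≤ ‖1 - (r : ℂ) * Complex.exp (θ * Complex.I)‖ := by
  have hsq : ‖1 - (r : ℂ) * Complex.exp (θ * Complex.I)‖ ^ 2 =
      (1 - r) ^ 2 + 2 * r * (1 - Real.cos θ) := by
    rw [Complex.sq_norm, Complex.normSq_apply, Complex.exp_mul_I, ← Complex.ofReal_cos,
      ← Complex.ofReal_sin]
    simp [Complex.cos_ofReal_re, Complex.sin_ofReal_re]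
    nlinarith [Real.sin_sq_add_cos_sq θ]
  have hcos := Real.cos_le_one_sub_mul_cos_sq hθ
  have hpi : 2 / Real.pi ^ 2 ≥ 1 / 8 := by
    rw [ge_iff_le, div_le_div_iff₀ (by norm_num) (by positivity)]
    nlinarith [Real.pi_pos, Real.pi_le_four]
  refine abs_le_of_sq_le_sq' ?_ (norm_nonneg _) |>.2
  rw [hsq, div_pow, sq_abs]
  have h1 : 2 / Real.pi ^ 2 * θ ^ 2 ≥ 1 / 8 * θ ^ 2 :=
    mul_le_mul_of_nonneg_right hpi (sq_nonneg _)
  nlinarith [sq_nonneg (1 - r), sq_nonneg θ]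

lemma pow_le_exp_of_sq_le {c x u : ℝ} (hu : 0 ≤ u) (h : u ^ 2 ≤ 1 - c * x) (m : ℕ) :
    u ^ m ≤ Real.exp (-(c * m * x / 2)) := by
  have h1 : u ≤ Real.exp (-(c * x / 2)) := by
    refine abs_le_of_sq_le_sq' ?_ (Real.exp_pos _).le |>.2
    rw [← Real.exp_nat_mul]
    refine h.trans ?_
    have := Real.add_one_le_exp (-(c * x))
    calc 1 - c * x ≤ Real.exp (-(c * x)) := by linarith
      _ = _ := by congr 1; push_cast; ring
  calc u ^ m ≤ Real.exp (-(c * x / 2)) ^ m := pow_le_pow_left₀ hu h1 m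
    _ = _ := by rw [← Real.exp_nat_mul]; congr 1; ring

/-- The constant in the exponential bounds for `Fⁿ (1 - F)` and its derivative. -/
noncomputable def expConst (c : ℝ) : ℝ := 4 * Real.exp c / c + 1

lemma expConst_pos {c : ℝ} (hc : 0 < c) : 0 < expConst c := by
  unfold expConst
  positivity

/-- A factor `n x` is absorbed by the exponential decay of `uⁿ`, at the price of half the rate. -/
lemma mul_pow_mul_le {c x u : ℝ} (hc : 0 < c) (hu : 0 ≤ u) (hx0 : 0 ≤ x) (hx : x ≤ 2)
    (h : u ^ 2 ≤ 1 - c * x) (n : ℕ) :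
    (n + 1) * (u ^ n * x) + u ^ (n + 1) ≤
      expConst c * Real.exp (-(c * (n + 1) * x / 4)) := by
  set t := c * (n + 1) * x / 4 with ht
  have ht0 : 0 ≤ t := by positivity
  have h1 : u ^ n ≤ Real.exp c * Real.exp (-(2 * t)) := by
    refine (pow_le_exp_of_sq_le hu h n).trans ?_
    rw [← Real.exp_add, Real.exp_le_exp]
    nlinarith
  have h2 : u ^ (n + 1) ≤ Real.exp (-t) := by
    refine (pow_le_exp_of_sq_le hu h (n + 1)).trans ?_
    rw [Real.exp_le_exp]
    push_cast
    linarith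
  have h3 : t * Real.exp (-(2 * t)) ≤ Real.exp (-t) := by
    have : Real.exp (-(2 * t)) = Real.exp (-t) * Real.exp (-t) := by
      rw [← Real.exp_add]; congr 1; ring
    rw [this, ← mul_assoc]
    refine mul_le_of_le_one_left (Real.exp_pos _).le ?_
    have h4 := Real.add_one_le_exp t
    rw [Real.exp_neg, ← div_eq_mul_inv, div_le_one (Real.exp_pos _)]
    linarith
  have h5 : ((n : ℝ) + 1) * (u ^ n * x) ≤ 4 * Real.exp c / c * Real.exp (-t) := by
    calc ((n : ℝ) + 1) * (u ^ n * x) = (4 * t / c) * u ^ n := by rw [ht]; field_simp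
      _ ≤ (4 * t / c) * (Real.exp c * Real.exp (-(2 * t))) :=
        mul_le_mul_of_nonneg_left h1 (by positivity)
      _ = 4 * Real.exp c / c * (t * Real.exp (-(2 * t))) := by ring
      _ ≤ _ := mul_le_mul_of_nonneg_left h3 (by positivity)
  unfold expConst
  linarith

/-- Bounds at `z = r exp (iθ)`, with `w = 1 - z` and `F = 1 - w ^ β`, in terms of `θ` and uniform
in `r`. The first quantity dominates both `(n + 1) |Fⁿ⁺¹ (1 - F)|` and the factor
`|(n + 1) Fⁿ (1 - F) - Fⁿ⁺¹|` of the derivative of `Fⁿ⁺¹ (1 - F)`; the last one is the size of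
the derivative of `F` up to a constant. -/
lemma circle_bounds {β : ℝ} (hβ : β ∈ Set.Ioo (0 : ℝ) 1) {r θ : ℝ} (hr : 1 / 2 ≤ r) (hr1 : r < 1)
    (hθ : |θ| ≤ Real.pi) (hθ0 : θ ≠ 0) (n : ℕ) {w F : ℂ}
    (hw : w = 1 - (r : ℂ) * Complex.exp (θ * Complex.I)) (hF : F = 1 - w ^ (β : ℂ)) :
    (n + 1) * (‖F‖ ^ n * ‖w ^ (β : ℂ)‖) + ‖F‖ ^ (n + 1) ≤
      expConst (sectorConst β) *
        Real.exp (-(sectorConst β / 16 * (n + 1) * |θ| ^ β)) ∧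
    ‖F‖ ≤ 1 ∧ ‖w ^ (((β - 1 : ℝ) : ℂ))‖ ≤ 4 * |θ| ^ (β - 1) := by
  have hc := sectorConst_pos hβ
  have hz : ‖(r : ℂ) * Complex.exp (θ * Complex.I)‖ < 1 := by
    rw [norm_mul, Complex.norm_exp_ofReal_mul_I, mul_one, Complex.norm_real, Real.norm_eq_abs,
      abs_of_nonneg (by linarith)]
    exact hr1
  have hF2 := norm_sq_one_sub_cpow_le hβ hz
  have hge := norm_one_sub_ge hr hθ
  rw [← hw] at hF2 hge
  rw [← hF] at hF2
  have hθpos : 0 < |θ| := abs_pos.2 hθ0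
  have hw2 : ‖w‖ ≤ 2 := by
    rw [hw]
    refine (norm_sub_le _ _).trans ?_
    rw [norm_one]
    linarith
  have hwpos : 0 < ‖w‖ := by linarith [div_pos hθpos (by norm_num : (0 : ℝ) < 4)]
  have hx0 : 0 ≤ ‖w‖ ^ β := by positivity
  have hx2 : ‖w‖ ^ β ≤ 2 := by
    calc ‖w‖ ^ β ≤ 2 ^ β := Real.rpow_le_rpow hwpos.le hw2 hβ.1.le
      _ ≤ 2 ^ (1 : ℝ) := Real.rpow_le_rpow_of_exponent_le (by norm_num) hβ.2.le
      _ = 2 := Real.rpow_one 2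
  have hxθ : |θ| ^ β / 4 ≤ ‖w‖ ^ β := by
    calc |θ| ^ β / 4 = |θ| ^ β / 4 ^ (1 : ℝ) := by rw [Real.rpow_one]
      _ ≤ |θ| ^ β / 4 ^ β := by
        gcongr
        · norm_num
        · exact hβ.2.le
      _ = (|θ| / 4) ^ β := (Real.div_rpow hθpos.le (by norm_num) β).symm
      _ ≤ ‖w‖ ^ β := Real.rpow_le_rpow (by positivity) hge hβ.1.le
  have hwβ : ∀ s : ℝ, ‖w ^ (s : ℂ)‖ = ‖w‖ ^ s := fun s =>
    Complex.norm_cpow_real w s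
  refine ⟨?_, ?_, ?_⟩
  · rw [hwβ]
    refine (mul_pow_mul_le hc (norm_nonneg F) hx0 hx2 hF2 n).trans ?_
    refine mul_le_mul_of_nonneg_left (Real.exp_le_exp.2 ?_) (expConst_pos hc).le
    have h1 : sectorConst β * (n + 1) * (|θ| ^ β / 4) ≤ sectorConst β * (n + 1) * ‖w‖ ^ β :=
      mul_le_mul_of_nonneg_left hxθ (by positivity)
    linarith
  · have h1 : ‖F‖ ^ 2 ≤ 1 ^ 2 := by nlinarith [mul_nonneg hc.le hx0]
    exact abs_le_of_sq_le_sq' h1 zero_le_one |>.2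
  · rw [hwβ]
    calc ‖w‖ ^ (β - 1) ≤ (|θ| / 4) ^ (β - 1) :=
          Real.rpow_le_rpow_of_nonpos (by positivity) hge (by linarith [hβ.2])
      _ = |θ| ^ (β - 1) * 4 ^ (1 - β) := by
        rw [Real.div_rpow hθpos.le (by norm_num), div_eq_mul_inv, ← Real.rpow_neg (by norm_num)]
        congr 2
        ring
      _ ≤ |θ| ^ (β - 1) * 4 ^ (1 : ℝ) := by
        gcongr
        · norm_num
        · linarith [hβ.1]
      _ = _ := by rw [Real.rpow_one, mul_comm]

/-! ### The power series `Fⁿ (1 - F)` -/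

lemma derivative_rescale (r : ℂ) (p : PowerSeries ℂ) :
    PowerSeries.derivative ℂ (PowerSeries.rescale r p) =
      PowerSeries.C r * PowerSeries.rescale r (PowerSeries.derivative ℂ p) := by
  ext k
  rw [PowerSeries.coeff_derivative, PowerSeries.coeff_rescale, PowerSeries.coeff_C_mul,
    PowerSeries.coeff_rescale, PowerSeries.coeff_derivative]
  ring

lemma evalSeries_rescale (r : ℂ) (p : PowerSeries ℂ) (z : ℂ) :
    evalSeries (PowerSeries.rescale r p) z = evalSeries p (r * z) := by
  unfold evalSeries
  refine tsum_congr fun k => ?_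
  rw [PowerSeries.coeff_rescale, smul_eq_mul, smul_eq_mul, mul_pow]
  ring

lemma derivative_pow_mul_one_sub (H : PowerSeries ℂ) (n : ℕ) :
    PowerSeries.derivative ℂ (H ^ (n + 1) * (1 - H)) =
      PowerSeries.derivative ℂ H *
        (PowerSeries.C ((n + 1 : ℕ) : ℂ) * (H ^ n * (1 - H)) - H ^ (n + 1)) := by
  rw [Derivation.leibniz, Derivation.leibniz_pow, map_sub, Derivation.map_one_eq_zero]
  simp only [smul_eq_mul, nsmul_eq_mul, Nat.add_sub_cancel, map_natCast]
  ring

/-- Evaluation on the unit circle of `Fⁿ⁺¹ (1 - F)` dilated by `r`, and of its derivative. -/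
lemma evalSeries_dilated {β r θ : ℝ} (hr0 : 0 ≤ r) (hr1 : r < 1) (n : ℕ) {H : PowerSeries ℂ}
    (hH : H = PowerSeries.rescale (r : ℂ) (fracSeries β)) {w F : ℂ}
    (hw : w = 1 - (r : ℂ) * Complex.exp (θ * Complex.I)) (hF : F = 1 - w ^ (β : ℂ)) :
    AbsSummable (H ^ (n + 1) * (1 - H)) ∧
    AbsSummable (PowerSeries.derivative ℂ (H ^ (n + 1) * (1 - H))) ∧
    evalSeries (H ^ (n + 1) * (1 - H)) (Complex.exp (θ * Complex.I)) =
      F ^ (n + 1) * w ^ (β : ℂ) ∧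
    evalSeries (PowerSeries.derivative ℂ (H ^ (n + 1) * (1 - H)))
        (Complex.exp (θ * Complex.I)) =
      r * (β * w ^ (((β - 1 : ℝ) : ℂ))) *
        (((n + 1 : ℕ) : ℂ) * (F ^ n * w ^ (β : ℂ)) - F ^ (n + 1)) := by
  set e := Complex.exp (θ * Complex.I) with he
  have he1 : ‖e‖ = 1 := Complex.norm_exp_ofReal_mul_I θ
  have hx := norm_pow_le_one_of_norm_le_one he1.le
  have hrn : ‖(r : ℂ)‖ < 1 := by rwa [Complex.norm_real, Real.norm_eq_abs, abs_of_nonneg hr0]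
  have hz : ‖(r : ℂ) * e‖ < 1 := by rwa [norm_mul, he1, mul_one]
  have hHs : AbsSummable H := by
    rw [hH, fracSeries, map_sub, map_one]
    exact AbsSummable.one.sub (absSummable_rescale_binomSeries β hrn)
  have h1H : AbsSummable (1 - H) := AbsSummable.one.sub hHs
  have hBs := absSummable_rescale_binomSeries (β - 1) hrn
  have hDH : PowerSeries.derivative ℂ H = PowerSeries.C (r : ℂ) *
      (PowerSeries.C (β : ℂ) * PowerSeries.rescale (r : ℂ) (binomSeries (β - 1))) := by
    rw [hH, derivative_rescale, derivative_fracSeries, map_mul]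
    congr 2
    ext k
    rw [PowerSeries.coeff_rescale, PowerSeries.coeff_C]
    split_ifs with hk <;> simp [hk]
  have hDHs : AbsSummable (PowerSeries.derivative ℂ H) := by
    rw [hDH]
    exact (AbsSummable.C _).mul ((AbsSummable.C _).mul hBs)
  have hin : AbsSummable
      (PowerSeries.C ((n + 1 : ℕ) : ℂ) * (H ^ n * (1 - H)) - H ^ (n + 1)) :=
    ((AbsSummable.C _).mul ((hHs.pow n).mul h1H)).sub (hHs.pow _)
  have hevH : evalSeries H e = F := by
    rw [hH, evalSeries_rescale, evalSeries_fracSeries β hz, hF, hw]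
  have hev1H : evalSeries (1 - H) e = w ^ (β : ℂ) := by
    rw [evalSeries_sub hx AbsSummable.one hHs, evalSeries_one, hevH, hF, sub_sub_cancel]
  have hevB : evalSeries (PowerSeries.rescale (r : ℂ) (binomSeries (β - 1))) e =
      w ^ (((β - 1 : ℝ) : ℂ)) := by
    rw [evalSeries_rescale, hw]
    simpa only [evalSeries, smul_eq_mul] using (hasSum_binomSeries (β - 1) hz).tsum_eq
  refine ⟨(hHs.pow _).mul h1H, ?_, ?_, ?_⟩
  · rw [derivative_pow_mul_one_sub]
    exact hDHs.mul hin
  · rw [evalSeries_mul hx (hHs.pow _) h1H, evalSeries_pow hx hHs, hevH, hev1H]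
  · rw [derivative_pow_mul_one_sub, evalSeries_mul hx hDHs hin, hDH,
      evalSeries_mul hx (AbsSummable.C _) ((AbsSummable.C _).mul hBs),
      evalSeries_mul hx (AbsSummable.C _) hBs, hevB,
      evalSeries_sub hx ((AbsSummable.C _).mul ((hHs.pow n).mul h1H)) (hHs.pow _),
      evalSeries_mul hx (AbsSummable.C _) ((hHs.pow n).mul h1H),
      evalSeries_mul hx (hHs.pow n) h1H, evalSeries_pow hx hHs, evalSeries_pow hx hHs,
      hevH, hev1H, evalSeries_C, evalSeries_C, evalSeries_C]
    rfl

/-! ### The `ℓ¹` estimate -/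

/-- The `ℓ¹` bound for `Fⁿ⁺¹ (1 - F)` dilated by `r`, uniform in `r`. The balancing scale is
`L = (n + 1) ^ (1 / β)`; the condition `1 / 2 < β` makes the derivative square integrable on the
unit circle. -/
lemma sum_norm_coeff_dilated_le {β : ℝ} (hβ2 : 1 / 2 < β) (hβ1 : β < 1) :
    ∃ C : ℝ, ∀ r : ℝ, 1 / 2 ≤ r → r < 1 → ∀ n N : ℕ, ∑ k ∈ Finset.range N,
      ‖PowerSeries.coeff k (PowerSeries.rescale (r : ℂ)
        (fracSeries β ^ (n + 1) * (1 - fracSeries β)))‖ ≤ C / (n + 1) := by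
  have hβ0 : 0 < β := by linarith
  have hβ : β ∈ Set.Ioo (0 : ℝ) 1 := ⟨hβ0, hβ1⟩
  have hc := sectorConst_pos hβ
  set c := sectorConst β with hcdef
  set K := expConst c with hK
  have hK0 : 0 < K := expConst_pos hc
  set b := c / 8 with hb
  have hb0 : 0 < b := by positivity
  set M : ℝ → ℝ := fun s => 2 * (b ^ (-(s + 1) / β) * (1 / β) * Real.Gamma ((s + 1) / β)) with hM
  have hM0 : ∀ s, -1 < s → 0 ≤ M s := fun s hs => by
    have : 0 ≤ Real.Gamma ((s + 1) / β) :=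
      (Real.Gamma_pos_of_pos (div_pos (by linarith) hβ0)).le
    simp only [hM]
    positivity
  have hs0 : (-1 : ℝ) < 0 := by norm_num
  have hs1 : (-1 : ℝ) < 2 * β - 2 := by linarith
  have hMa := hM0 0 hs0
  have hMb := hM0 _ hs1
  refine ⟨Real.sqrt (8 * (16 * K ^ 2 * (M 0 + M (2 * β - 2)))), fun r hr hr1 n N => ?_⟩
  set ν : ℝ := (n : ℝ) + 1 with hν
  have hν1 : 1 ≤ ν := by simp [hν]
  have hν0 : 0 < ν := by linarith
  set H := PowerSeries.rescale (r : ℂ) (fracSeries β) with hH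
  have hG : PowerSeries.rescale (r : ℂ) (fracSeries β ^ (n + 1) * (1 - fracSeries β)) =
      H ^ (n + 1) * (1 - H) := by
    rw [map_mul, map_pow, map_sub, map_one]
  rw [hG]
  set g := H ^ (n + 1) * (1 - H) with hg
  have hr0 : 0 ≤ r := by linarith
  obtain ⟨hgs, hDgs, -, -⟩ := evalSeries_dilated (θ := 0) hr0 hr1 n hH rfl rfl
  set L := ν ^ (1 / β) with hL
  have hL0 : 0 < L := by positivity
  have hL1 : 1 ≤ L := Real.one_le_rpow hν1 (by positivity)
  have hMν : ∀ s, 2 * ((b * ν) ^ (-(s + 1) / β) * (1 / β) * Real.Gamma ((s + 1) / β)) =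
      ν ^ (-(s + 1) / β) * M s := fun s => by
    rw [Real.mul_rpow hb0.le hν0.le]
    simp only [hM]
    ring
  have hpi : (2 * Real.pi)⁻¹ ≤ 1 := inv_le_one_of_one_le₀ (by linarith [Real.pi_gt_three])
  have hexp : ∀ θ : ℝ, Real.exp (-(c / 16 * ν * |θ| ^ β)) ^ 2 = Real.exp (-(b * ν) * |θ| ^ β) :=
    fun θ => by
      rw [← Real.exp_nat_mul]
      congr 1
      push_cast
      ring
  set A := 16 * K ^ 2 * (M 0 + M (2 * β - 2)) / ν ^ 2 with hA
  have hfinal := sum_le_sqrt_of_sq_bounds (d := fun k => ‖PowerSeries.coeff k g‖) (A := A) hL1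
    (fun N => ?_) (fun N => ?_) N
  · refine hfinal.trans (le_of_eq ?_)
    rw [hA, ← mul_div_assoc, Real.sqrt_div (by positivity), Real.sqrt_sq hν0.le]
  · have hI := integral_le_of_le_rpow_mul_exp (s := 0) (β := β) (b := b * ν)
      (A := K ^ 2 / ν ^ 2)
      (h := fun θ : ℝ => ‖evalSeries g (Complex.exp (θ * Complex.I))‖ ^ 2)
      hs0 hβ0 (by positivity) (by positivity) (fun θ => by positivity) (fun θ hθ hθ0 => ?_)
    · rw [hMν, zero_add, neg_div, Real.rpow_neg hν0.le] at hI
      refine (sum_sq_norm_coeff_le hgs N).trans ?_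
      refine (mul_le_of_le_one_left (intervalIntegral.integral_nonneg
        (by linarith [Real.pi_pos]) fun θ _ => by positivity) hpi).trans (hI.trans ?_)
      rw [hA, ← hL]
      have h1 : K ^ 2 * M 0 ≤ 16 * K ^ 2 * (M 0 + M (2 * β - 2)) := by
        nlinarith [mul_nonneg (sq_nonneg K) hMa, mul_nonneg (sq_nonneg K) hMb]
      calc K ^ 2 / ν ^ 2 * (L⁻¹ * M 0) = K ^ 2 * M 0 / ν ^ 2 / L := by
            field_simp
        _ ≤ _ := by gcongr
    · obtain ⟨-, -, hev, -⟩ := evalSeries_dilated (θ := θ) hr0 hr1 n hH rfl rfl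
      obtain ⟨h1, h2, -⟩ := circle_bounds hβ hr hr1 hθ hθ0 n rfl rfl
      rw [← hcdef, ← hK, ← hν] at h1
      set w : ℂ := 1 - (r : ℂ) * Complex.exp (θ * Complex.I) with hw
      set F : ℂ := 1 - w ^ (β : ℂ) with hF
      have h3 : ‖F ^ (n + 1) * w ^ (β : ℂ)‖ ≤ K / ν * Real.exp (-(c / 16 * ν * |θ| ^ β)) := by
        rw [div_mul_eq_mul_div, le_div_iff₀ hν0, mul_comm]
        refine le_trans ?_ h1
        rw [norm_mul, norm_pow, pow_succ]
        have h4 : ‖F‖ ^ n * ‖F‖ * ‖w ^ (β : ℂ)‖ ≤ ‖F‖ ^ n * ‖w ^ (β : ℂ)‖ :=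
          mul_le_mul_of_nonneg_right (mul_le_of_le_one_right (by positivity) h2)
            (norm_nonneg _)
        have h5 : 0 ≤ ‖F‖ ^ n * ‖F‖ := by positivity
        nlinarith [mul_le_mul_of_nonneg_left h4 hν0.le]
      rw [hg, hev, Real.rpow_zero, one_mul, ← hexp, ← div_pow, ← mul_pow]
      exact pow_le_pow_left₀ (norm_nonneg _) h3 2
  · have hI := integral_le_of_le_rpow_mul_exp (s := 2 * β - 2) (β := β) (b := b * ν)
      (A := 16 * K ^ 2)
      (h := fun θ : ℝ => ‖evalSeries (PowerSeries.derivative ℂ g)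
        (Complex.exp (θ * Complex.I))‖ ^ 2)
      hs1 hβ0 (by positivity) (by positivity) (fun θ => by positivity) (fun θ hθ hθ0 => ?_)
    · have hexpo : -(2 * β - 2 + 1) / β = 1 / β - (2 : ℕ) := by
        push_cast
        field_simp
        ring
      rw [hMν, hexpo, Real.rpow_sub hν0, Real.rpow_natCast, ← hL] at hI
      have hcoeff : ∑ k ∈ Finset.range N,
          (‖PowerSeries.coeff (k + 1) g‖ * ((k : ℝ) + 1)) ^ 2 =
          ∑ k ∈ Finset.range N,
            ‖PowerSeries.coeff k (PowerSeries.derivative ℂ g)‖ ^ 2 := by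
        refine Finset.sum_congr rfl fun k _ => ?_
        have hk : ‖(k : ℂ) + 1‖ = (k : ℝ) + 1 := by
          rw [← Nat.cast_succ, Complex.norm_natCast, Nat.cast_succ]
        rw [PowerSeries.coeff_derivative, norm_mul, hk]
      rw [hcoeff]
      refine (sum_sq_norm_coeff_le hDgs N).trans ?_
      refine (mul_le_of_le_one_left (intervalIntegral.integral_nonneg
        (by linarith [Real.pi_pos]) fun θ _ => by positivity) hpi).trans (hI.trans ?_)
      rw [hA]
      have h1 : 16 * K ^ 2 * M (2 * β - 2) ≤ 16 * K ^ 2 * (M 0 + M (2 * β - 2)) := by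
        nlinarith [mul_nonneg (sq_nonneg K) hMa]
      calc 16 * K ^ 2 * (L / ν ^ 2 * M (2 * β - 2))
          = 16 * K ^ 2 * M (2 * β - 2) / ν ^ 2 * L := by
            field_simp
        _ ≤ _ := by gcongr
    · obtain ⟨-, -, -, hev⟩ := evalSeries_dilated (θ := θ) hr0 hr1 n hH rfl rfl
      obtain ⟨h1, -, h2⟩ := circle_bounds hβ hr hr1 hθ hθ0 n rfl rfl
      rw [← hcdef, ← hK, ← hν] at h1
      rw [hg, hev]
      set w : ℂ := 1 - (r : ℂ) * Complex.exp (θ * Complex.I) with hw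
      set F : ℂ := 1 - w ^ (β : ℂ) with hF
      have hθpos : 0 < |θ| := abs_pos.2 hθ0
      have h3 : ‖((n + 1 : ℕ) : ℂ) * (F ^ n * w ^ (β : ℂ)) - F ^ (n + 1)‖ ≤
          K * Real.exp (-(c / 16 * ν * |θ| ^ β)) := by
        refine (norm_sub_le _ _).trans (le_trans (le_of_eq ?_) h1)
        rw [norm_mul, norm_mul, norm_pow, norm_pow, Complex.norm_natCast, hν]
        push_cast
        rfl
      have h4 : ‖(r : ℂ) * (β * w ^ (((β - 1 : ℝ) : ℂ)))‖ ≤ 4 * |θ| ^ (β - 1) := by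
        rw [norm_mul, norm_mul, Complex.norm_real, Complex.norm_real, Real.norm_of_nonneg hr0,
          Real.norm_of_nonneg hβ0.le, ← mul_assoc]
        refine le_trans (mul_le_of_le_one_left (norm_nonneg _) ?_) h2
        nlinarith
      have h5 := mul_le_mul h4 h3 (norm_nonneg _) (by positivity)
      have h6 : |θ| ^ (2 * β - 2) = (|θ| ^ (β - 1)) ^ 2 := by
        rw [← Real.rpow_natCast, ← Real.rpow_mul hθpos.le]
        congr 1
        push_cast
        ring
      rw [norm_mul]
      refine (pow_le_pow_left₀ (by positivity) h5 2).trans (le_of_eq ?_)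
      rw [h6, ← hexp]
      ring

lemma wienerNorm_pow_mul_one_sub_le {β : ℝ} (hβ2 : 1 / 2 < β) (hβ1 : β < 1) :
    ∃ C : ℝ, ∀ n : ℕ,
      wienerNorm (fracSeries β ^ (n + 1) * (1 - fracSeries β)) ≤ C / (n + 1) := by
  obtain ⟨C, hC⟩ := sum_norm_coeff_dilated_le hβ2 hβ1
  refine ⟨C, fun n => Real.tsum_le_of_sum_range_le (fun _ => norm_nonneg _) fun N => ?_⟩
  set G := fracSeries β ^ (n + 1) * (1 - fracSeries β) with hG
  have hcont : Continuous fun r : ℝ => ∑ k ∈ Finset.range N,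
      ‖PowerSeries.coeff k (PowerSeries.rescale (r : ℂ) G)‖ := by
    simp only [PowerSeries.coeff_rescale]
    fun_prop
  have hlim := (hcont.tendsto 1).mono_left (nhdsWithin_le_nhds (s := Set.Iio 1))
  simp only [Complex.ofReal_one, PowerSeries.rescale_one, RingHom.id_apply] at hlim
  refine le_of_tendsto hlim ?_
  have hnear : Set.Ioo (1 / 2 : ℝ) 1 ∈ nhdsWithin (1 : ℝ) (Set.Iio 1) :=
    Ioo_mem_nhdsLT (by norm_num)
  filter_upwards [hnear] with r hr
  exact hC r hr.1.le hr.2 n N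

/-! ### Ritt operators -/

lemma fracPow_powerBounded {X : Type*} [NormedAddCommGroup X] [NormedSpace ℂ X]
    [CompleteSpace X] {T : X →L[ℂ] X} {M : ℝ} (hT : ∀ n : ℕ, ‖T ^ n‖ ≤ M)
    {α : ℝ} (hα : α ∈ Set.Ioo (0 : ℝ) 1) (n : ℕ) : ‖fracPow α T ^ n‖ ≤ M := by
  have hM : 0 ≤ M := (norm_nonneg _).trans (hT 0)
  have hs := absSummable_fracSeries hα
  rw [fracPow_eq_evalSeries hT hα, ← evalSeries_pow hT hs]
  exact (norm_evalSeries_le hT (hs.pow n)).trans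
    (mul_le_of_le_one_left hM (hs.wienerNorm_pow_le_one (wienerNorm_fracSeries_le hα) n))

lemma fracPow_ritt_of_half_lt {X : Type*} [NormedAddCommGroup X] [NormedSpace ℂ X]
    [CompleteSpace X] {T : X →L[ℂ] X} {M : ℝ} (hT : ∀ n : ℕ, ‖T ^ n‖ ≤ M)
    {β : ℝ} (hβ2 : 1 / 2 < β) (hβ1 : β < 1) :
    ∃ C : ℝ, ∀ n : ℕ, 1 ≤ n →
      (n : ℝ) * ‖fracPow β T ^ n - fracPow β T ^ (n - 1)‖ ≤ C := by
  have hβ : β ∈ Set.Ioo (0 : ℝ) 1 := ⟨by linarith, hβ1⟩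
  have hM : 0 ≤ M := (norm_nonneg _).trans (hT 0)
  have hs := absSummable_fracSeries hβ
  obtain ⟨C, hC⟩ := wienerNorm_pow_mul_one_sub_le hβ2 hβ1
  have hC0 : 0 ≤ C := by simpa using (AbsSummable.wienerNorm_nonneg _).trans (hC 0)
  refine ⟨2 * M + 2 * (C * M), fun n hn => ?_⟩
  have hCM : 0 ≤ C * M := mul_nonneg hC0 hM
  match n, hn with
  | 1, _ =>
    have h := (norm_sub_le (fracPow β T ^ 1) (fracPow β T ^ 0)).trans
      (add_le_add (fracPow_powerBounded hT hβ 1) (fracPow_powerBounded hT hβ 0))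
    simp only [Nat.cast_one, one_mul, Nat.sub_self]
    linarith
  | m + 2, _ =>
    have hev : fracPow β T ^ (m + 2) - fracPow β T ^ (m + 1) =
        -evalSeries (fracSeries β ^ (m + 1) * (1 - fracSeries β)) T := by
      rw [evalSeries_mul hT (hs.pow _) (AbsSummable.one.sub hs),
        evalSeries_sub hT AbsSummable.one hs, evalSeries_pow hT hs, evalSeries_one,
        fracPow_eq_evalSeries hT hβ, pow_succ _ (m + 1), mul_sub, mul_one, neg_sub]
    have h1 := (norm_evalSeries_le hT ((hs.pow (m + 1)).mul (AbsSummable.one.sub hs))).trans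
      (mul_le_mul_of_nonneg_right (hC m) hM)
    rw [show m + 2 - 1 = m + 1 from rfl, hev, norm_neg]
    push_cast
    have hm : (0 : ℝ) ≤ m := Nat.cast_nonneg m
    calc ((m : ℝ) + 2) * ‖evalSeries (fracSeries β ^ (m + 1) * (1 - fracSeries β)) T‖
        ≤ (2 * (m + 1)) * (C / (m + 1) * M) :=
          mul_le_mul (by linarith) h1 (norm_nonneg _) (by positivity)
      _ = 2 * (C * M) := by field_simp
      _ ≤ _ := by linarith

/-- If `T` is power bounded on a complex Banach space and `α ∈ (0,1)`, then
`T_α = Σ_{k≥1} a_{α,k} T^k` is a Ritt operator. -/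
theorem stmt_0 {X : Type*} [NormedAddCommGroup X] [NormedSpace ℂ X] [CompleteSpace X]
    (T : X →L[ℂ] X) (hT : ∃ C : ℝ, ∀ n : ℕ, ‖T ^ n‖ ≤ C)
    (α : ℝ) (hα : α ∈ Set.Ioo (0 : ℝ) 1) :
    ∃ C : ℝ, (∀ n : ℕ, ‖fracPow α T ^ n‖ ≤ C) ∧
      ∀ n : ℕ, 1 ≤ n → (n : ℝ) * ‖fracPow α T ^ n - fracPow α T ^ (n - 1)‖ ≤ C := by
  obtain ⟨M, hM⟩ := hT
  have hα0 := hα.1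
  have hα1 := hα.2
  -- `α = β γ` with `1 / 2 < β < 1` and `0 < γ < 1`, so that `T_α = (T_γ)_β`.
  set β := (1 + α) / 2 with hβ
  have hβ2 : 1 / 2 < β := by linarith
  have hβ1 : β < 1 := by linarith
  have hβ0 : 0 < β := by linarith
  have hγ : α / β ∈ Set.Ioo (0 : ℝ) 1 :=
    ⟨by positivity, (div_lt_one hβ0).2 (by linarith)⟩
  have hcomp : fracPow α T = fracPow β (fracPow (α / β) T) := by
    rw [fracPow_fracPow hM ⟨hβ0, hβ1⟩ hγ, mul_div_cancel₀ _ hβ0.ne']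
  obtain ⟨C, hC⟩ := fracPow_ritt_of_half_lt (fracPow_powerBounded hM hγ) hβ2 hβ1
  refine ⟨max M C, fun n => ?_, fun n hn => ?_⟩
  · exact (fracPow_powerBounded hM hα n).trans (le_max_left _ _)
  · rw [hcomp]
    exact (hC n hn).trans (le_max_right _ _)
end

section
/- Let X be a complex Banach space and let T : X → X be a Ritt operator. Then there exists α₀ > 1 such that for every non-integer α ∈ (1, α₀), the operator T_α = Σ_{k=1}^∞ a_{α,k} T^k is again a Ritt operator. -/
/-!
Ritt operators are characterised by the resolvent bound `‖(1 - z T)⁻¹‖ ≤ K / |1 - z|` on the open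
unit disc (`RittElt.resCond`, `ResCond.ritt`), so it suffices to carry this bound over from `T` to
`T_α = 1 - (1 - T) ^ α`. Everything takes place in the closed algebra generated by `T`, a
commutative Banach algebra.

Write `A = 1 - T`, `α = 1 + ε`. The coefficients of `(1 - x) ^ α` are within `2 ε` in `ℓ¹` of those
of `1 - x`, so `‖A ^ α - A‖ = O(ε)` because `T` is power bounded. This settles those `z` for which
`|1 - z|` is at least `|z|`. Near `z = 1` such an additive perturbation is not small compared with
the inverse of the resolvent, and one rescales. With `μ = (1 - z) / z`, the claim is a bound
`O(1 / |μ|)` on the inverse of `μ + A ^ α`. Let `s = |μ| ^ (1 / α)`, `u = μ / |μ|`,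
`B = s (s + A)⁻¹`. Then `1 - B = A (s + A)⁻¹` and
`(μ + A ^ α) B ^ α = |μ| (u B ^ α + (1 - B) ^ α)`.
Here `B ^ β` is an average of powers of `T` with the negative binomial weights `nb s β`. Hence `B`
is power bounded with the same constant as `T`, which gives `‖(1 - B) ^ α - (1 - B)‖ = O(ε)`, and
comparison of the weights (`nb_sub`) gives `‖B ^ α - B‖ = O(ε)`, both uniformly in `s`. Finally
`u B + (1 - B) = (s u + A) (s + A)⁻¹` has the inverse `1 + (s - s u) (s u + A)⁻¹`, bounded
uniformly by the resolvent bound for `T`. For small `ε` the factor `u B ^ α + (1 - B) ^ α` is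
therefore invertible with a uniformly bounded inverse (`ResCond.one_sub_cf`).

The functional equations for `B ^ β` and `A ^ α` are identities between absolutely convergent power
series in `T`; they follow from the scalar identities on `(-1, 1)` by uniqueness of Taylor
coefficients (`ps_unique`).
-/

open scoped BigOperators

/-- `T` is a Ritt operator: `{T^n : n ≥ 0}` and `{n(T^n - T^(n-1)) : n ≥ 1}` are bounded. -/
def IsRitt {X : Type*} [NormedAddCommGroup X] [NormedSpace ℂ X] (T : X →L[ℂ] X) : Prop :=
  ∃ C : ℝ, (∀ n : ℕ, ‖T ^ n‖ ≤ C) ∧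
    ∀ n : ℕ, 1 ≤ n → (n : ℝ) * ‖T ^ n - T ^ (n - 1)‖ ≤ C

open Filter Topology

/-! ### Taylor coefficients of functions dominated by `|1 - z|⁻²` -/

/-- The mean of `1 / |1 - z| ^ 2` over the circle `|z| = r`: this is the Poisson kernel at `r`, up to
the factor `1 - r ^ 2`. -/
theorem circle_integral_bound {r : ℝ} (hr0 : 0 ≤ r) (hr1 : r < 1) :
    (2 * Real.pi)⁻¹ * ∫ θ in (0 : ℝ)..2 * Real.pi, (‖1 - circleMap 0 r θ‖ ^ 2)⁻¹
      = (1 - r ^ 2)⁻¹ := by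
  have h := DiffContOnCl.circleAverage_re_herglotzRieszKernel_smul (E := ℂ) (f := fun _ => (1 : ℂ))
    (c := 0) (w := (r : ℂ)) (R := 1) diffContOnCl_const (by simp [abs_of_nonneg hr0, hr1])
  have hk : ∀ θ : ℝ, (herglotzRieszKernel 0 (r : ℂ) (circleMap 0 1 θ)).re
      = (1 - r ^ 2) * (‖1 - circleMap 0 r θ‖ ^ 2)⁻¹ := by
    intro θ
    have h1 := congrFun (poissonKernel_eq_re_herglotzRieszKernel (c := 0) (w := (r : ℂ)))
      (circleMap 0 1 θ)
    simp only [Function.comp_apply] at h1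
    rw [← h1, poissonKernel_def]
    -- `|r e^{iθ} - 1| = |e^{iθ} - r|`
    have h2 : ‖circleMap 0 1 θ - (r : ℂ)‖ ^ 2 = ‖1 - circleMap 0 r θ‖ ^ 2 := by
      rw [← Complex.normSq_eq_norm_sq, ← Complex.normSq_eq_norm_sq, Complex.normSq_apply,
        Complex.normSq_apply]
      simp [circleMap, Complex.exp_re, Complex.exp_im]
      have := Real.sin_sq_add_cos_sq θ
      linear_combination (1 - r ^ 2) * this
    simp only [sub_zero]
    rw [h2]
    simp [div_eq_mul_inv]
  rw [Real.circleAverage] at h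
  simp only [Pi.smul_apply', Function.comp_apply, hk] at h
  have h3 : (((2 * Real.pi)⁻¹ * ∫ θ in (0 : ℝ)..2 * Real.pi,
      (1 - r ^ 2) * (‖1 - circleMap 0 r θ‖ ^ 2)⁻¹ : ℝ) : ℂ) = 1 := by
    simp only [Complex.real_smul, mul_one] at h
    rw [intervalIntegral.integral_ofReal] at h
    push_cast at h ⊢
    exact h
  have h4 : (2 * Real.pi)⁻¹ * ∫ θ in (0 : ℝ)..2 * Real.pi,
      (1 - r ^ 2) * (‖1 - circleMap 0 r θ‖ ^ 2)⁻¹ = 1 := by exact_mod_cast h3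
  rw [intervalIntegral.integral_const_mul] at h4
  have h5 : (1 - r ^ 2) ≠ 0 := by nlinarith
  field_simp
  field_simp at h4
  linarith

/-- Cauchy estimate for the Taylor coefficients of a function dominated by `M / |1 - z| ^ 2` on the
circle `|z| = r`. -/
theorem coeff_bound {E : Type*} [NormedAddCommGroup E] [NormedSpace ℂ E] [CompleteSpace E]
    {f : ℂ → E} {c : ℕ → E} {M r : ℝ} (hr0 : 0 < r) (hr1 : r < 1)
    (hf : DifferentiableOn ℂ f (Metric.ball 0 1))
    (hc : ∀ᶠ z in 𝓝 (0 : ℂ), HasSum (fun n => z ^ n • c n) (f z))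
    (hM : ∀ z : ℂ, ‖z‖ = r → ‖f z‖ ≤ M * (‖1 - z‖ ^ 2)⁻¹) (n : ℕ) :
    ‖c n‖ ≤ M * (1 - r ^ 2)⁻¹ * r⁻¹ ^ n := by
  have hsub : Metric.closedBall (0 : ℂ) r ⊆ Metric.ball 0 1 := Metric.closedBall_subset_ball hr1
  have h1 : HasFPowerSeriesOnBall f (cauchyPowerSeries f 0 r) 0 (r.toNNReal) := by
    have := DifferentiableOn.hasFPowerSeriesOnBall (R := r.toNNReal) (c := (0 : ℂ)) (f := f)
      (hf.mono (by rw [Real.coe_toNNReal r hr0.le]; exact hsub)) (by simpa using hr0)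
    rwa [Real.coe_toNNReal r hr0.le] at this
  have h2 : HasFPowerSeriesAt f
      (fun n => ContinuousMultilinearMap.mkPiRing ℂ (Fin n) (c n)) 0 := by
    refine hasFPowerSeriesAt_iff.2 ?_
    filter_upwards [hc] with z hz
    simpa [FormalMultilinearSeries.coeff] using hz
  have h3 := h1.hasFPowerSeriesAt.eq_formalMultilinearSeries h2
  have h4 := norm_cauchyPowerSeries_le f 0 r n
  rw [h3] at h4
  simp only [ContinuousMultilinearMap.norm_mkPiRing, abs_of_pos hr0] at h4
  refine h4.trans (mul_le_mul_of_nonneg_right ?_ (by positivity))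
  rw [← circle_integral_bound hr0.le hr1, mul_left_comm, ← intervalIntegral.integral_const_mul M]
  have hmem : ∀ θ, circleMap 0 r θ ∈ Metric.ball (0 : ℂ) 1 := fun θ => by
    simp [abs_of_pos hr0, hr1]
  have hne : ∀ θ, (1 : ℂ) - circleMap 0 r θ ≠ 0 := fun θ h => by
    have := hmem θ
    rw [← sub_eq_zero.1 h] at this
    simp at this
  refine mul_le_mul_of_nonneg_left ?_ (by positivity)
  apply intervalIntegral.integral_mono_on (by positivity)
  · apply Continuous.intervalIntegrable
    exact (hf.continuousOn.comp_continuous (continuous_circleMap 0 r) hmem).norm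
  · apply Continuous.intervalIntegrable
    refine continuous_const.mul (Continuous.inv₀ (by fun_prop) fun θ => ?_)
    simpa using hne θ
  · intro θ _
    exact hM _ (by simp [abs_of_pos hr0])

/-- If `f` is dominated by `M / |1 - z| ^ 2` near the boundary of the disc, its Taylor coefficients
grow at most linearly. -/
theorem coeff_bound_linear {E : Type*} [NormedAddCommGroup E] [NormedSpace ℂ E] [CompleteSpace E]
    {f : ℂ → E} {c : ℕ → E} {M : ℝ}
    (hf : DifferentiableOn ℂ f (Metric.ball 0 1))
    (hc : ∀ᶠ z in 𝓝 (0 : ℂ), HasSum (fun n => z ^ n • c n) (f z))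
    (hM0 : 0 ≤ M)
    (hM : ∀ z : ℂ, ‖z‖ < 1 → 1 / 2 ≤ ‖z‖ → ‖f z‖ ≤ M * (‖1 - z‖ ^ 2)⁻¹) (n : ℕ) :
    ‖c n‖ ≤ 4 * M * (n + 1) := by
  -- `coeff_bound` is applied on the circle of radius `1 - 1 / (2 (n + 1))`
  set t : ℝ := 1 / (2 * (n + 1)) with ht
  have hn : (0 : ℝ) ≤ n := n.cast_nonneg
  have ht0 : 0 < t := by positivity
  have ht1 : t ≤ 1 / 2 := by
    rw [ht, div_le_div_iff₀ (by positivity) (by norm_num)]; linarith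
  have hnt : n * t ≤ 1 / 2 := by
    rw [ht, mul_one_div, div_le_div_iff₀ (by positivity) (by norm_num)]; linarith
  have hb : 1 / 2 ≤ (1 - t) ^ n := by
    have := one_add_mul_le_pow (a := -t) (by linarith) n
    have h' : 1 + (n : ℝ) * -t = 1 - n * t := by ring
    rw [h', ← sub_eq_add_neg] at this
    linarith
  have h := coeff_bound (r := 1 - t) (by linarith) (by linarith) hf hc
    (fun z hz => hM z (by linarith) (by linarith)) n
  refine h.trans ?_
  have h1 : (1 - (1 - t) ^ 2)⁻¹ ≤ t⁻¹ := by
    apply inv_anti₀ ht0; nlinarith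
  have h2 : (1 - t)⁻¹ ^ n ≤ 2 := by
    rw [inv_pow]
    calc ((1 - t) ^ n)⁻¹ ≤ (1 / 2)⁻¹ := inv_anti₀ (by norm_num) hb
      _ = 2 := by norm_num
  have h3 : t⁻¹ = 2 * (n + 1) := by rw [ht]; simp
  calc M * (1 - (1 - t) ^ 2)⁻¹ * (1 - t)⁻¹ ^ n ≤ M * t⁻¹ * 2 := by
        have : 0 ≤ 1 - t := by linarith
        gcongr
    _ = 4 * M * (n + 1) := by rw [h3]; ring

/-! ### Ritt elements and the resolvent condition -/

section Banach
variable {𝒜 : Type*} [NormedCommRing 𝒜] [NormedAlgebra ℂ 𝒜] [CompleteSpace 𝒜]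

/-- The Ritt condition for an element of a commutative Banach algebra. -/
def RittElt (T : 𝒜) : Prop :=
  ∃ C : ℝ, (∀ n : ℕ, ‖T ^ n‖ ≤ C) ∧
    ∀ n : ℕ, 1 ≤ n → (n : ℝ) * ‖T ^ n - T ^ (n - 1)‖ ≤ C

/-- The resolvent condition `‖(1 - z T)⁻¹‖ ≤ K / |1 - z|` on the open unit disc. With `w = 1 / z` this
is the usual bound `‖(w - 1) (w - T)⁻¹‖ ≤ K` for `|w| > 1`. -/
def ResCond (K : ℝ) (T : 𝒜) : Prop :=
  ∀ z : ℂ, ‖z‖ < 1 → ∃ R : 𝒜, (1 - z • T) * R = 1 ∧ ‖1 - z‖ * ‖R‖ ≤ K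

/-- The resolvent condition implies the Ritt condition. Since `(1 - z S)⁻²` has Taylor coefficients
`(n + 1) S ^ n` and is `O(|1 - z|⁻²)`, the powers are bounded; the same argument for
`(1 - z S)⁻³ (1 - S)`, with coefficients `(n + 2 choose 2) S ^ n (1 - S)`, bounds the differences. -/
theorem ResCond.ritt {K : ℝ} {S : 𝒜} (h : ResCond K S) : RittElt S := by
  set ρ : ℂ → 𝒜 := fun z => Ring.inverse (1 - z • S) with hρ
  have hK : 0 ≤ K := by
    obtain ⟨R, -, hR⟩ := h 0 (by simp)
    exact le_trans (by positivity) hR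
  have hu : ∀ z : ℂ, ‖z‖ < 1 → IsUnit (1 - z • S) ∧ ‖ρ z‖ ≤ K * ‖1 - z‖⁻¹ ∧
      (1 - z • S) * ρ z = 1 := by
    intro z hz
    obtain ⟨R, hR, hb⟩ := h z hz
    have hU : IsUnit (1 - z • S) := IsUnit.of_mul_eq_one R hR
    have he : ρ z = R := by
      rw [hρ]
      calc Ring.inverse (1 - z • S) = Ring.inverse (1 - z • S) * ((1 - z • S) * R) := by
            rw [hR, mul_one]
        _ = R := by rw [← mul_assoc, Ring.inverse_mul_cancel _ hU, one_mul]
    have hz1 : 0 < ‖1 - z‖ := by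
      rw [norm_pos_iff]; rintro h0
      rw [← sub_eq_zero.1 h0] at hz; simp at hz
    refine ⟨hU, ?_, he ▸ hR⟩
    rw [he, ← div_eq_mul_inv, le_div_iff₀ hz1]; linarith
  have hd : DifferentiableOn ℂ ρ (Metric.ball 0 1) := by
    intro z hz
    have hz' : ‖z‖ < 1 := by simpa using hz
    apply DifferentiableAt.differentiableWithinAt
    have h1 : DifferentiableAt ℂ (Ring.inverse : 𝒜 → 𝒜) (1 - z • S) :=
      differentiableAt_inverse (𝕜 := ℂ) (hu z hz').1
    have h2 : DifferentiableAt ℂ (fun z : ℂ => 1 - z • S) z := by fun_prop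
    exact DifferentiableAt.comp z h1 h2
  have hser : ∀ k : ℕ, ∀ᶠ z in 𝓝 (0 : ℂ),
      HasSum (fun n => z ^ n • (((n + k).choose k : 𝒜) * S ^ n)) (ρ z ^ (k + 1)) := by
    intro k
    have hev : ∀ᶠ z in 𝓝 (0 : ℂ), ‖z • S‖ < 1 := by
      have hcont : Continuous fun z : ℂ => ‖z • S‖ := by fun_prop
      have := hcont.tendsto 0
      simp only [zero_smul, norm_zero] at this
      exact this.eventually (gt_mem_nhds one_pos)
    filter_upwards [hev] with z hz
    have := hasSum_choose_mul_geometric_of_norm_lt_one' k hz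
    convert! this using 2 with n
    rw [smul_pow, mul_smul_comm]
  have hpow : ∀ n : ℕ, ‖S ^ n‖ ≤ 4 * K ^ 2 := by
    intro n
    have hb := coeff_bound_linear (M := K ^ 2) (hd.pow 2) (hser 1) (by positivity)
      (fun z hz _ => by
        refine (norm_pow_le' _ two_pos).trans ?_
        rw [← inv_pow, ← mul_pow]
        exact pow_le_pow_left₀ (norm_nonneg _) (hu z hz).2.1 2) n
    have hn : (0 : ℝ) < n + 1 := by positivity
    have he : (((n + 1).choose 1 : ℕ) : 𝒜) * S ^ n = ((n + 1 : ℝ) : ℂ) • S ^ n := by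
      rw [Nat.choose_one_right, Algebra.smul_def]; simp
    rw [he, norm_smul, Complex.norm_real, Real.norm_of_nonneg hn.le] at hb
    nlinarith
  have hone : ‖(1 : 𝒜)‖ ≤ 4 * K ^ 2 := by simpa using hpow 0
  set M : ℝ := 2 * (4 * K ^ 2 + K) * K ^ 2 with hMdef
  have hM0 : 0 ≤ M := by positivity
  have hdiff : ∀ n : ℕ, ((n : ℝ) + 1) * ‖S ^ n * (1 - S)‖ ≤ 8 * M := by
    intro n
    have hb := coeff_bound_linear (M := M) (f := fun z => ρ z ^ 3 * (1 - S))
      (c := fun n => (((n + 2).choose 2 : ℕ) : 𝒜) * S ^ n * (1 - S))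
      ((hd.pow 3).mul_const _) (by
        filter_upwards [hser 2] with z hz
        simpa [smul_mul_assoc] using hz.mul_right (1 - S)) hM0
      (fun z hz hz2 => by
        obtain ⟨-, hr, hr1⟩ := hu z hz
        have hz0 : z ≠ 0 := by rintro rfl; norm_num at hz2
        have h1 : ‖ρ z * (1 - S)‖ ≤ 2 * (4 * K ^ 2 + K) := by
          have e1 : z • (ρ z * (1 - S)) = 1 - (1 - z) • ρ z := by
            simp only [Algebra.smul_def, map_sub, map_one] at hr1 ⊢
            linear_combination hr1
          have e2 : ‖z‖ * ‖ρ z * (1 - S)‖ ≤ 4 * K ^ 2 + K := by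
            rw [← norm_smul, e1]
            refine (norm_sub_le _ _).trans (add_le_add hone ?_)
            rw [norm_smul]
            calc ‖1 - z‖ * ‖ρ z‖ ≤ ‖1 - z‖ * (K * ‖1 - z‖⁻¹) := by gcongr
              _ = K * (‖1 - z‖ * ‖1 - z‖⁻¹) := by ring
              _ ≤ K * 1 := by gcongr; exact mul_inv_le_one
              _ = K := mul_one K
          nlinarith [norm_nonneg (ρ z * (1 - S))]
        have e3 : ρ z ^ 3 * (1 - S) = ρ z * (1 - S) * ρ z ^ 2 := by ring
        rw [e3]
        refine (norm_mul_le _ _).trans ?_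
        have h2 : ‖ρ z ^ 2‖ ≤ K ^ 2 * (‖1 - z‖ ^ 2)⁻¹ := by
          refine (norm_pow_le' _ two_pos).trans ?_
          rw [← inv_pow, ← mul_pow]
          exact pow_le_pow_left₀ (norm_nonneg _) hr 2
        calc _ ≤ 2 * (4 * K ^ 2 + K) * (K ^ 2 * (‖1 - z‖ ^ 2)⁻¹) := by gcongr
          _ = M * (‖1 - z‖ ^ 2)⁻¹ := by rw [hMdef]; ring) n
    have hn : (0 : ℝ) ≤ n := by positivity
    have he : (((n + 2).choose 2 : ℕ) : 𝒜) * S ^ n * (1 - S)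
        = ((((n + 2).choose 2 : ℕ) : ℝ) : ℂ) • (S ^ n * (1 - S)) := by
      rw [Algebra.smul_def]; simp [mul_assoc]
    rw [he, norm_smul, Complex.norm_real, Real.norm_of_nonneg (by positivity),
      Nat.cast_choose_two] at hb
    push_cast at hb
    have h0 := norm_nonneg (S ^ n * (1 - S))
    have h5 : ((n : ℝ) + 1) * (((n : ℝ) + 2) * ‖S ^ n * (1 - S)‖) ≤ (n + 1) * (8 * M) := by
      nlinarith
    have h6 := le_of_mul_le_mul_left h5 (by positivity)
    nlinarith
  refine ⟨4 * K ^ 2 + 8 * M, fun n => (hpow n).trans (by linarith), fun n hn => ?_⟩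
  obtain ⟨m, rfl⟩ := Nat.exists_eq_add_of_le' hn
  have := hdiff m
  rw [show m + 1 - 1 = m from rfl, show S ^ (m + 1) - S ^ m = -(S ^ m * (1 - S)) by ring, norm_neg]
  push_cast
  nlinarith [sq_nonneg K]

theorem hasSum_telescope (N : ℕ) (hN : 1 ≤ N) :
    HasSum (fun k : ℕ => 1 / ((N + k : ℝ) * (N + k + 1))) (1 / N) := by
  have hN' : (1 : ℝ) ≤ N := by exact_mod_cast hN
  have hlim : Tendsto (fun n : ℕ => 1 / (N : ℝ) - 1 / ((n : ℝ) + N)) atTop (𝓝 (1 / N - 0)) := by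
    refine tendsto_const_nhds.sub ?_
    simp only [one_div]
    exact (tendsto_atTop_add_const_right _ _ tendsto_natCast_atTop_atTop).inv_tendsto_atTop
  rw [sub_zero] at hlim
  rw [hasSum_iff_tendsto_nat_of_nonneg (fun k => by positivity)]
  refine hlim.congr fun n => ?_
  induction n with
  | zero => simp
  | succ n ih =>
    rw [Finset.sum_range_succ, ← ih]
    push_cast
    have h1 : (n : ℝ) + N ≠ 0 := by positivity
    have h2 : (n : ℝ) + 1 + N ≠ 0 := by positivity
    have h3 : (N : ℝ) + n ≠ 0 := by positivity
    have h4 : (N : ℝ) + n + 1 ≠ 0 := by positivity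
    field_simp
    ring

/-- A Ritt element satisfies the resolvent condition. The geometric series is cut at
`N ≈ 1 / |1 - z|`; the head is estimated by power boundedness, the tail through
`‖T ^ n (1 - T) ^ 2‖ = O(1 / n ^ 2)`. -/
theorem RittElt.resCond {T : 𝒜} (h : RittElt T) : ∃ K, ResCond K T := by
  obtain ⟨C, hC, hD⟩ := h
  have hC0 : 0 ≤ C := (norm_nonneg _).trans (hC 0)
  have h1 : ∀ n : ℕ, ‖T ^ n * (1 - T)‖ ≤ C / (n + 1) := by
    intro n
    have := hD (n + 1) (by omega)
    rw [show n + 1 - 1 = n from rfl, show T ^ (n + 1) - T ^ n = -(T ^ n * (1 - T)) by ring,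
      norm_neg] at this
    rw [le_div_iff₀ (by positivity)]
    push_cast at this
    linarith
  have h2 : ∀ n : ℕ, ‖T ^ n * (1 - T) ^ 2‖ ≤ 4 * C ^ 2 / ((n : ℝ) + 1) ^ 2 := by
    intro n
    have hsplit : T ^ n * (1 - T) ^ 2
        = (T ^ (n / 2) * (1 - T)) * (T ^ (n - n / 2) * (1 - T)) := by
      have : n = n / 2 + (n - n / 2) := by omega
      conv_lhs => rw [this, pow_add]
      ring
    have hhalf : ∀ m : ℕ, n ≤ 2 * m + 1 → ‖T ^ m * (1 - T)‖ ≤ 2 * C / (n + 1) := by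
      intro m hm
      refine (h1 m).trans ?_
      rw [div_le_div_iff₀ (by positivity) (by positivity)]
      have : (n : ℝ) ≤ 2 * m + 1 := by exact_mod_cast hm
      nlinarith
    rw [hsplit]
    refine (norm_mul_le _ _).trans ?_
    calc _ ≤ (2 * C / (n + 1)) * (2 * C / (n + 1)) := by
          gcongr
          · exact hhalf _ (by omega)
          · exact hhalf _ (by omega)
      _ = _ := by rw [div_mul_div_comm]; ring_nf
  refine ⟨5 * C + 4 * C ^ 2, fun z hz => ?_⟩
  have hzT : Summable fun k : ℕ => (z • T) ^ k := by
    refine Summable.of_norm_bounded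
      ((summable_geometric_of_lt_one (norm_nonneg z) hz).mul_left C) fun k => ?_
    rw [smul_pow, norm_smul, norm_pow, mul_comm]
    gcongr
    exact hC k
  set R : 𝒜 := ∑' k : ℕ, (z • T) ^ k with hR
  have hRinv : (1 - z • T) * R = 1 := by
    have : R = 1 + z • T * R := by
      rw [hR, ← hzT.tsum_mul_left, hzT.tsum_eq_zero_add]
      simp [pow_succ']
    linear_combination this
  refine ⟨R, hRinv, ?_⟩
  set w : ℂ := 1 - z with hw
  have hw0 : 0 < ‖w‖ := by
    rw [norm_pos_iff]; rintro h0
    rw [← sub_eq_zero.1 h0] at hz; simp at hz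
  have hw2 : ‖w‖ ≤ 2 := by
    have := norm_sub_le (1 : ℂ) z
    rw [norm_one] at this
    linarith
  set N : ℕ := ⌈1 / ‖w‖⌉₊ with hN
  have hN1 : 1 ≤ N * ‖w‖ := by
    have := Nat.le_ceil (1 / ‖w‖)
    rwa [div_le_iff₀ hw0] at this
  have hN3 : N * ‖w‖ ≤ 3 := by
    have := (Nat.ceil_lt_add_one (a := 1 / ‖w‖) (by positivity)).le
    calc (N : ℝ) * ‖w‖ ≤ (1 / ‖w‖ + 1) * ‖w‖ := by gcongr
      _ = 1 + ‖w‖ := by field_simp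
      _ ≤ 3 := by linarith
  have hNpos : 1 ≤ N := Nat.one_le_ceil_iff.2 (by positivity)
  have hNr : (0 : ℝ) < N := by exact_mod_cast hNpos
  set P : 𝒜 := ∑ k ∈ Finset.range N, (z • T) ^ k with hP
  have hPn : ‖P‖ ≤ N * C := by
    refine (norm_sum_le _ _).trans ?_
    refine (Finset.sum_le_card_nsmul _ _ C fun k _ => ?_).trans (by simp)
    rw [smul_pow, norm_smul, norm_pow]
    calc ‖z‖ ^ k * ‖T ^ k‖ ≤ 1 * C := by
          gcongr
          · exact pow_le_one₀ (norm_nonneg _) hz.le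
          · exact hC k
      _ = C := one_mul C
  have hPR : P = R - (z • T) ^ N * R := by
    have := mul_neg_geom_sum (z • T) N
    linear_combination R * this - P * hRinv
  have htail : ‖T ^ N * (1 - T) ^ 2 * R‖ ≤ 4 * C ^ 2 / N := by
    rw [hR, ← hzT.tsum_mul_left]
    have hs := (hasSum_telescope N hNpos).mul_left (4 * C ^ 2)
    rw [mul_one_div] at hs
    refine tsum_of_norm_bounded hs fun k => ?_
    rw [smul_pow, mul_smul_comm, norm_smul, norm_pow,
      show T ^ N * (1 - T) ^ 2 * T ^ k = T ^ (N + k) * (1 - T) ^ 2 by ring]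
    calc ‖z‖ ^ k * ‖T ^ (N + k) * (1 - T) ^ 2‖
        ≤ 1 * (4 * C ^ 2 / (((N + k : ℕ) : ℝ) + 1) ^ 2) := by
          gcongr
          · exact pow_le_one₀ (norm_nonneg _) hz.le
          · exact h2 _
      _ ≤ 4 * C ^ 2 * (1 / ((N + k : ℝ) * (N + k + 1))) := by
          rw [one_mul, mul_one_div]
          push_cast
          gcongr
          nlinarith
  have hmid : ‖T ^ N * (1 - T) * R‖ ≤ C + 4 * C ^ 2 := by
    have e : w • (T ^ N * (1 - T) * R) = T ^ N * (1 - T) - z • (T ^ N * (1 - T) ^ 2 * R) := by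
      simp only [hw, Algebra.smul_def, map_sub, map_one] at hRinv ⊢
      linear_combination T ^ N * (1 - T) * hRinv
    have e2 : ‖w‖ * ‖T ^ N * (1 - T) * R‖ ≤ C / N + 4 * C ^ 2 / N := by
      rw [← norm_smul, e]
      refine (norm_sub_le _ _).trans (add_le_add ((h1 N).trans ?_) ?_)
      · gcongr; linarith
      · rw [norm_smul]
        calc _ ≤ 1 * (4 * C ^ 2 / N) := by gcongr
          _ = _ := one_mul _
    have e3 : N * (‖w‖ * ‖T ^ N * (1 - T) * R‖) ≤ C + 4 * C ^ 2 := by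
      calc _ ≤ N * (C / N + 4 * C ^ 2 / N) := by gcongr
        _ = _ := by field_simp
    nlinarith [norm_nonneg (T ^ N * (1 - T) * R)]
  have hfin : w • R = w • P + z ^ N • (T ^ N - z • (T ^ N * (1 - T) * R)) := by
    rw [smul_pow] at hPR
    simp only [hw, Algebra.smul_def, map_sub, map_one, map_pow] at hRinv hPR ⊢
    rw [hPR]
    linear_combination (algebraMap ℂ 𝒜 z) ^ N * T ^ N * hRinv
  rw [← norm_smul, hfin]
  have hzN : ‖z ^ N‖ ≤ 1 := by rw [norm_pow]; exact pow_le_one₀ (norm_nonneg _) hz.le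
  calc _ ≤ ‖w‖ * (N * C) + 1 * (C + 1 * (C + 4 * C ^ 2)) := by
        refine (norm_add_le _ _).trans ?_
        rw [norm_smul, norm_smul]
        gcongr
        refine (norm_sub_le _ _).trans ?_
        rw [norm_smul]
        gcongr
        exact hC N
    _ ≤ 3 * C + 1 * (C + 1 * (C + 4 * C ^ 2)) := by nlinarith
    _ = _ := by ring
end Banach

/-! ### Absolutely convergent power series at power bounded elements -/

section Series
variable {𝒜 : Type*} [NormedCommRing 𝒜] [NormedAlgebra ℝ 𝒜]

/-- The power series with real coefficients `c`, evaluated at `x`. It is used for summable `c` and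
power bounded `x`. -/
noncomputable def ps (c : ℕ → ℝ) (x : 𝒜) : 𝒜 := ∑' k : ℕ, c k • x ^ k

theorem ps_summable_norm {c : ℕ → ℝ} (hc : Summable c) {x : 𝒜} {C : ℝ}
    (hx : ∀ n : ℕ, ‖x ^ n‖ ≤ C) : Summable fun k => ‖c k • x ^ k‖ := by
  refine Summable.of_nonneg_of_le (fun _ => norm_nonneg _) (fun k => ?_) (hc.abs.mul_right C)
  rw [norm_smul, Real.norm_eq_abs]
  gcongr
  exact hx k

theorem ps_term_le (c : ℕ → ℝ) {C : ℝ} {x : 𝒜} (hx : ∀ n : ℕ, ‖x ^ n‖ ≤ C) (k : ℕ) :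
    ‖c k • x ^ k‖ ≤ |c k| * C := by
  rw [norm_smul, Real.norm_eq_abs]
  exact mul_le_mul_of_nonneg_left (hx k) (abs_nonneg _)

theorem ps_norm_le {c : ℕ → ℝ} {b C : ℝ} {x : 𝒜} (hc : Summable c) (hb : ∑' k, |c k| ≤ b)
    (hx : ∀ n : ℕ, ‖x ^ n‖ ≤ C) : ‖ps c x‖ ≤ C * b := by
  have hC0 : 0 ≤ C := (norm_nonneg _).trans (hx 0)
  have hs := ps_summable_norm hc hx
  have h1 : ‖ps c x‖ ≤ ∑' k, ‖c k • x ^ k‖ := norm_tsum_le_tsum_norm hs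
  have h2 : ∑' k, ‖c k • x ^ k‖ ≤ ∑' k, |c k| * C :=
    hs.tsum_le_tsum (ps_term_le c hx) (hc.abs.mul_right C)
  rw [tsum_mul_right] at h2
  nlinarith

theorem ps_sub [CompleteSpace 𝒜] {c d : ℕ → ℝ} (hc : Summable c) (hd : Summable d) {x : 𝒜} {C : ℝ}
    (hx : ∀ n : ℕ, ‖x ^ n‖ ≤ C) : ps c x - ps d x = ps (fun k => c k - d k) x := by
  unfold ps
  rw [← (ps_summable_norm hc hx).of_norm.tsum_sub (ps_summable_norm hd hx).of_norm]
  simp only [sub_smul]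

/-- The Cauchy product of two coefficient sequences. -/
def cauchyProd (c d : ℕ → ℝ) (n : ℕ) : ℝ := ∑ p ∈ Finset.HasAntidiagonal.antidiagonal n, c p.1 * d p.2

theorem conv_summable {c d : ℕ → ℝ} (hc : Summable c) (hd : Summable d) :
    Summable (cauchyProd c d) :=
  (summable_norm_sum_mul_antidiagonal_of_summable_norm hc.norm hd.norm).of_norm

theorem ps_mul [CompleteSpace 𝒜] {c d : ℕ → ℝ} (hc : Summable c) (hd : Summable d) {x : 𝒜} {C : ℝ}
    (hx : ∀ n : ℕ, ‖x ^ n‖ ≤ C) : ps c x * ps d x = ps (cauchyProd c d) x := by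
  unfold ps
  rw [tsum_mul_tsum_eq_tsum_sum_antidiagonal_of_summable_norm (ps_summable_norm hc hx)
    (ps_summable_norm hd hx)]
  refine tsum_congr fun n => ?_
  rw [cauchyProd, Finset.sum_smul]
  refine Finset.sum_congr rfl fun p hp => ?_
  rw [← Finset.HasAntidiagonal.mem_antidiagonal.1 hp, pow_add, smul_mul_smul_comm]

theorem double_summable {g : ℕ → ℝ} (hg : Summable g) {q : ℕ → ℕ → ℝ}
    (hq0 : ∀ k j, 0 ≤ q k j) (hq : ∀ k, HasSum (q k) 1) :
    Summable fun p : ℕ × ℕ => g p.1 * q p.1 p.2 := by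
  rw [← summable_abs_iff, summable_prod_of_nonneg (fun _ => abs_nonneg _)]
  refine ⟨fun k => ((hq k).summable.mul_left (g k)).abs, ?_⟩
  simp only [abs_mul, abs_of_nonneg (hq0 _ _), tsum_mul_left, (hq _).tsum_eq, mul_one]
  exact hg.abs

theorem mix_summable {g : ℕ → ℝ} (hg : Summable g) {q : ℕ → ℕ → ℝ}
    (hq0 : ∀ k j, 0 ≤ q k j) (hq : ∀ k, HasSum (q k) 1) :
    Summable fun j => ∑' k, g k * q k j :=
  (double_summable hg hq0 hq).prod_symm.prod

/-- Exchange of summation: a series in the elements `ps (q k) x` is again a power series in `x`. -/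
theorem ps_comp [CompleteSpace 𝒜] {g : ℕ → ℝ} (hg : Summable g) {q : ℕ → ℕ → ℝ}
    (hq0 : ∀ k j, 0 ≤ q k j) (hq : ∀ k, HasSum (q k) 1) {x : 𝒜} {C : ℝ}
    (hx : ∀ n : ℕ, ‖x ^ n‖ ≤ C) :
    ∑' k, g k • ps (q k) x = ps (fun j => ∑' k, g k * q k j) x := by
  have hs := double_summable hg hq0 hq
  have hsx : Summable fun p : ℕ × ℕ => (g p.1 * q p.1 p.2) • x ^ p.2 := by
    refine Summable.of_norm_bounded (hs.abs.mul_right C) fun p => ?_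
    rw [norm_smul, Real.norm_eq_abs]
    exact mul_le_mul_of_nonneg_left (hx _) (abs_nonneg _)
  have h1 : ∀ k, g k • ps (q k) x = ∑' j, (g k * q k j) • x ^ j := by
    intro k
    rw [ps, ← (ps_summable_norm (hq k).summable hx).of_norm.tsum_const_smul]
    simp only [smul_smul]
  have h2 : ∀ j, ∑' k, (g k * q k j) • x ^ j = (∑' k, g k * q k j) • x ^ j := by
    intro j
    exact Summable.tsum_smul_const (hs.prod_symm.prod_factor j) _
  have h3 : ∑' k, ∑' j, (g k * q k j) • x ^ j = ∑' j, ∑' k, (g k * q k j) • x ^ j :=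
    Summable.tsum_comm (f := fun j k => (g k * q k j) • x ^ j) hsx.prod_symm
  rw [tsum_congr h1, h3, tsum_congr h2, ps]

/-- Coefficients are determined by the values on `(-1, 1)`. Thereby identities between scalar
functions transfer to power bounded elements of Banach algebras. -/
theorem ps_unique {c d : ℕ → ℝ} (hc : Summable c) (hd : Summable d)
    (h : ∀ x : ℝ, |x| < 1 → ps c x = ps d x) : c = d := by
  have key : ∀ {e : ℕ → ℝ}, Summable e →
      HasFPowerSeriesAt (fun x : ℝ => ps e x) (FormalMultilinearSeries.ofScalars ℝ e) 0 := by
    intro e he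
    refine hasFPowerSeriesAt_iff.2 ?_
    filter_upwards [Metric.ball_mem_nhds (0 : ℝ) one_pos] with x hx
    have hx' : |x| < 1 := by simpa using hx
    have := (ps_summable_norm (x := x) he (C := 1) fun n => by
      rw [norm_pow]; exact pow_le_one₀ (norm_nonneg _) hx'.le).of_norm.hasSum
    simpa [FormalMultilinearSeries.coeff_ofScalars, ps, mul_comm] using this
  have h1 := (key hc).eq_formalMultilinearSeries_of_eventually (key hd) (by
    filter_upwards [Metric.ball_mem_nhds (0 : ℝ) one_pos] with x hx
    exact h x (by simpa using hx))
  exact FormalMultilinearSeries.ofScalars_series_injective ℝ ℝ h1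
end Series

/-! ### The Taylor coefficients of `(1 - x) ^ β` -/

section Coefficients

/-- `cf β k` is the `k`-th Taylor coefficient of `(1 - x) ^ β` at `0`. -/
noncomputable def cf (β : ℝ) (k : ℕ) : ℝ := ∏ i ∈ Finset.range k, (((i : ℝ) - β) / (i + 1))

@[simp] theorem cf_zero (β : ℝ) : cf β 0 = 1 := by simp [cf]

theorem cf_succ (β : ℝ) (k : ℕ) : cf β (k + 1) = cf β k * (((k : ℝ) - β) / (k + 1)) := by
  rw [cf, Finset.prod_range_succ, cf]

theorem cf_eq_choose (β : ℝ) (k : ℕ) : cf β k = (-1) ^ k * Ring.choose β k := by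
  have h := Ring.descPochhammer_eq_factorial_smul_choose β k
  induction k with
  | zero => simp
  | succ k ih =>
    have h' := Ring.descPochhammer_eq_factorial_smul_choose β k
    rw [cf_succ, ih h']
    rw [descPochhammer_succ_right] at h
    simp only [Polynomial.smeval_mul, Polynomial.smeval_sub, Polynomial.smeval_X, pow_one,
      Polynomial.smeval_natCast, pow_zero, h', nsmul_eq_mul, Nat.factorial_succ] at h
    have hk : ((k.factorial : ℕ) : ℝ) ≠ 0 := by exact_mod_cast k.factorial_ne_zero
    have hk1 : (k : ℝ) + 1 ≠ 0 := by positivity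
    push_cast at h
    have h2 : Ring.choose β k * (β - k) = (k + 1) * Ring.choose β (k + 1) := by
      apply mul_left_cancel₀ hk
      linear_combination h
    field_simp
    rw [pow_succ]
    linear_combination (-1 : ℝ) * (-1) ^ k * h2

theorem cf_hasSum (β : ℝ) {x : ℝ} (hx : |x| < 1) :
    HasSum (fun k => cf β k * x ^ k) ((1 - x) ^ β) := by
  have h := (Real.one_add_rpow_hasFPowerSeriesOnBall_zero (a := β)).hasSum (y := -x) (by
    simpa [enorm_eq_nnnorm, ← NNReal.coe_lt_coe] using hx)
  simp only [binomialSeries_apply, zero_add] at h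
  have e : (fun k => cf β k * x ^ k) =
      fun n => Ring.choose β n • (List.ofFn fun _ : Fin n => -x).prod := by
    funext k
    rw [cf_eq_choose, List.prod_ofFn]
    simp only [neg_pow x, smul_eq_mul, Finset.prod_const, Finset.card_univ, Fintype.card_fin]
    ring
  rwa [e, sub_eq_add_neg]

theorem cf_nonneg_of_nonpos {β : ℝ} (hβ : β ≤ 0) (k : ℕ) : 0 ≤ cf β k :=
  Finset.prod_nonneg fun i _ => div_nonneg (by linarith [Nat.cast_nonneg (α := ℝ) i]) (by positivity)

theorem cf_sum (β : ℝ) (hβ : β ≠ 0) (n : ℕ) :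
    ∑ k ∈ Finset.range (n + 1), cf β k = -((n + 1) * cf β (n + 1)) / β := by
  induction n with
  | zero => simp [cf_succ]; field_simp
  | succ n ih =>
    rw [Finset.sum_range_succ, ih, cf_succ β (n + 1)]
    push_cast
    have : (n : ℝ) + 1 + 1 ≠ 0 := by positivity
    field_simp
    ring

theorem cf_one (β : ℝ) : cf β 1 = -β := by simp [cf_succ]

theorem cf_add_two_nonneg {β : ℝ} (h1 : 1 ≤ β) (h2 : β ≤ 2) (k : ℕ) : 0 ≤ cf β (k + 2) := by
  induction k with
  | zero =>
    simp [cf_succ]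
    nlinarith
  | succ k ih =>
    rw [cf_succ]
    exact mul_nonneg ih (div_nonneg (by push_cast; linarith [Nat.cast_nonneg (α := ℝ) k]) (by positivity))

/-- For `1 ≤ β ≤ 2` the coefficients of index at least `2` are nonnegative with sum at most `β - 1`. -/
theorem cf_tail {β : ℝ} (h1 : 1 ≤ β) (h2 : β ≤ 2) :
    Summable (fun k => cf β (k + 2)) ∧ ∑' k, cf β (k + 2) ≤ β - 1 := by
  have hb : ∀ n, ∑ k ∈ Finset.range n, cf β (k + 2) ≤ β - 1 := by
    intro n
    have h := cf_sum β (by linarith) (n + 1)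
    rw [Finset.sum_range_succ', Finset.sum_range_succ'] at h
    have h3 : 0 ≤ (((n + 1 : ℕ) : ℝ) + 1) * cf β (n + 2) / β :=
      div_nonneg (mul_nonneg (by positivity) (cf_add_two_nonneg h1 h2 n)) (by linarith)
    simp only [zero_add, cf_one, cf_zero, neg_div, add_assoc, one_add_one_eq_two] at h h3
    linarith
  exact ⟨summable_of_sum_range_le (cf_add_two_nonneg h1 h2) hb,
    Real.tsum_le_of_sum_range_le (cf_add_two_nonneg h1 h2) hb⟩

theorem cf_summable {β : ℝ} (h1 : 1 ≤ β) (h2 : β ≤ 2) : Summable (cf β) :=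
  (summable_nat_add_iff 2).1 (cf_tail h1 h2).1

/-- The coefficients of the polynomial `a + b x`. -/
def linCoef (a b : ℝ) : ℕ → ℝ
  | 0 => a
  | 1 => b
  | _ + 2 => 0

theorem linCoef_summable (a b : ℝ) : Summable (linCoef a b) :=
  (summable_nat_add_iff 2).1 (by simp [linCoef])

/-- In `ℓ¹`, the coefficients of `(1 - x) ^ β` are close to those of `1 - x` when `β` is close to `1`. -/
theorem cf_sub_linCoef {β : ℝ} (h1 : 1 ≤ β) (h2 : β ≤ 2) :
    ∑' k, |cf β k - linCoef 1 (-1) k| ≤ 2 * (β - 1) := by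
  have hs : Summable fun k => |cf β k - linCoef 1 (-1) k| :=
    ((cf_summable h1 h2).sub (linCoef_summable 1 (-1))).abs
  rw [← hs.sum_add_tsum_nat_add 2]
  have h3 := (cf_tail h1 h2).2
  simp only [linCoef, sub_zero, abs_of_nonneg (cf_add_two_nonneg h1 h2 _)]
  simp [Finset.sum_range_succ, cf_one]
  rw [show -β + 1 = -(β - 1) by ring, abs_neg, abs_of_nonneg (by linarith)]
  linarith

/-- As a product of affine functions, `β ↦ cf (-β) k` is log-concave, so that
`cf (-1) k * cf (-(1 + 2 ε)) k ≤ cf (-(1 + ε)) k ^ 2`, where `cf (-1) k = 1`. This is the reverse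
inequality, up to a factor `1 + O(ε ^ 2)` independent of `k`. -/
theorem cf_sq_le {ε : ℝ} (h0 : 0 ≤ ε) (h1 : ε ≤ 1 / 2) (k : ℕ) :
    cf (-(1 + ε)) k ^ 2 ≤ (1 + 4 * ε ^ 2) * cf (-(1 + 2 * ε)) k := by
  -- the factor `1 - 1 / (k + 1)` makes the induction close: consecutive values differ by
  -- `1 / ((k + 1) (k + 2))`, which absorbs the relative error `ε ^ 2 / (k + 1) ^ 2` of one step
  have key : ∀ k : ℕ, cf (-(1 + ε)) k ^ 2 ≤
      (1 + 4 * ε ^ 2 * (1 - 1 / (k + 1))) * cf (-(1 + 2 * ε)) k := by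
    intro k
    induction k with
    | zero => simp
    | succ k ih =>
      have hc : 0 ≤ cf (-(1 + 2 * ε)) k := cf_nonneg_of_nonpos (by linarith) k
      rw [cf_succ, cf_succ, mul_pow]
      set t : ℝ := (k : ℝ) + 1 with ht
      have ht1 : 1 ≤ t := by rw [ht]; linarith [Nat.cast_nonneg (α := ℝ) k]
      have e1 : (k : ℝ) - -(1 + ε) = t + ε := by rw [ht]; ring
      have e2 : (k : ℝ) - -(1 + 2 * ε) = t + 2 * ε := by rw [ht]; ring
      push_cast
      rw [e1, e2, ← ht]
      have step : (1 + 4 * ε ^ 2 * (1 - 1 / t)) * ((t + ε) / t) ^ 2 ≤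
          (1 + 4 * ε ^ 2 * (1 - 1 / (t + 1))) * ((t + 2 * ε) / t) := by
        have ht0 : t ≠ 0 := by linarith
        have ht2 : t + 1 ≠ 0 := by linarith
        have hP : 1 + 4 * ε ^ 2 * (1 - 1 / t) ≤ 2 := by
          have : 0 ≤ 1 / t := by positivity
          nlinarith [sq_nonneg ε]
        have hQ : 2 ≤ 4 * ((t + 2 * ε) / (t + 1)) := by
          rw [← mul_div_assoc, le_div_iff₀ (by linarith)]
          linarith
        have hd : 0 ≤ ε ^ 2 / t ^ 2 *
            (4 * ((t + 2 * ε) / (t + 1)) - (1 + 4 * ε ^ 2 * (1 - 1 / t))) :=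
          mul_nonneg (by positivity) (by linarith)
        have e : (1 + 4 * ε ^ 2 * (1 - 1 / (t + 1))) * ((t + 2 * ε) / t) -
            (1 + 4 * ε ^ 2 * (1 - 1 / t)) * ((t + ε) / t) ^ 2 = ε ^ 2 / t ^ 2 *
            (4 * ((t + 2 * ε) / (t + 1)) - (1 + 4 * ε ^ 2 * (1 - 1 / t))) := by
          field_simp
          ring
        linarith
      calc _ ≤ ((1 + 4 * ε ^ 2 * (1 - 1 / t)) * cf (-(1 + 2 * ε)) k) * ((t + ε) / t) ^ 2 :=
            mul_le_mul_of_nonneg_right ih (sq_nonneg _)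
        _ = ((1 + 4 * ε ^ 2 * (1 - 1 / t)) * ((t + ε) / t) ^ 2) * cf (-(1 + 2 * ε)) k := by ring
        _ ≤ _ := mul_le_mul_of_nonneg_right step hc
        _ = _ := by ring
  refine (key k).trans (mul_le_mul_of_nonneg_right ?_ (cf_nonneg_of_nonpos (by linarith) k))
  have : (0 : ℝ) ≤ 1 / (k + 1) := by positivity
  nlinarith [sq_nonneg ε]

end Coefficients

/-! ### Negative binomial weights -/

section NegativeBinomial

/-- Negative binomial weights: `nb s β` is the coefficient sequence of `(s / (1 + s - x)) ^ β`.
For `s > 0` and `β ≥ 0` it is a probability distribution on `ℕ`. -/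
noncomputable def nb (s β : ℝ) (j : ℕ) : ℝ := (s / (1 + s)) ^ β * cf (-β) j * ((1 + s)⁻¹) ^ j

theorem nb_nonneg {s β : ℝ} (hs : 0 < s) (hβ : 0 ≤ β) (j : ℕ) : 0 ≤ nb s β j :=
  mul_nonneg (mul_nonneg (by positivity) (cf_nonneg_of_nonpos (by linarith) j)) (by positivity)

theorem nb_hasSum_mul {s : ℝ} (hs : 0 < s) (β : ℝ) {x : ℝ} (hx : |x| ≤ 1) :
    HasSum (fun j => nb s β j * x ^ j) ((s / (1 + s - x)) ^ β) := by
  have hx1 : x ≤ 1 := (le_abs_self x).trans hx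
  have hy : |(1 + s)⁻¹ * x| < 1 := by
    rw [abs_mul, abs_of_pos (by positivity), inv_mul_lt_iff₀ (by linarith)]
    linarith
  have h := (cf_hasSum (-β) hy).mul_left ((s / (1 + s)) ^ β)
  have e : 1 - (1 + s)⁻¹ * x = (1 + s - x) / (1 + s) := by field_simp
  have e2 : (s / (1 + s)) ^ β * (1 - (1 + s)⁻¹ * x) ^ (-β) = (s / (1 + s - x)) ^ β := by
    have : 0 < 1 + s - x := by linarith
    rw [e, Real.rpow_neg (by positivity), ← Real.inv_rpow (by positivity),
      ← Real.mul_rpow (by positivity) (by positivity)]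
    congr 1
    field_simp
  rw [e2] at h
  convert! h using 2
  rw [nb, mul_pow]
  ring

theorem nb_hasSum {s : ℝ} (hs : 0 < s) (β : ℝ) : HasSum (nb s β) 1 := by
  have h := nb_hasSum_mul hs β (x := 1) (by simp)
  simpa [hs.ne'] using h

theorem nb_ps_real {s : ℝ} (hs : 0 < s) (β : ℝ) {x : ℝ} (hx : |x| ≤ 1) :
    ps (nb s β) x = (s / (1 + s - x)) ^ β := (nb_hasSum_mul hs β hx).tsum_eq

theorem pow_norm_le_one {x : ℝ} (hx : |x| < 1) (n : ℕ) : ‖x ^ n‖ ≤ 1 := by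
  rw [norm_pow]
  exact pow_le_one₀ (norm_nonneg _) hx.le

theorem nb_conv {s : ℝ} (hs : 0 < s) (β γ : ℝ) : cauchyProd (nb s β) (nb s γ) = nb s (β + γ) := by
  have h1 := (nb_hasSum hs β).summable
  have h2 := (nb_hasSum hs γ).summable
  refine ps_unique (conv_summable h1 h2) (nb_hasSum hs _).summable fun x hx => ?_
  have : 0 < 1 + s - x := by linarith [(abs_lt.1 hx).2]
  rw [← ps_mul h1 h2 (pow_norm_le_one hx), nb_ps_real hs _ hx.le, nb_ps_real hs _ hx.le,
    nb_ps_real hs _ hx.le, Real.rpow_add (by positivity)]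

theorem nb_zero (s : ℝ) (j : ℕ) : nb s 0 j = linCoef 1 0 j := by
  match j with
  | 0 => simp [nb, linCoef]
  | 1 => simp [nb, linCoef, cf_one]
  | j + 2 =>
    have : cf (-0) (j + 2) = 0 := Finset.prod_eq_zero (i := 0) (by simp) (by simp)
    simp only [nb, this, linCoef, mul_zero, zero_mul]

/-- The `ℓ¹` distance of `q = nb s (1 + ε)` and `p = nb s 1` is `O(ε)` uniformly in `s`. Indeed
`2 |q - p| ≤ ε p + (q - p) ^ 2 / (ε p)`, and `cf_sq_le` bounds `q ^ 2 / p` by a multiple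
`1 + 4 ε ^ 2` of `nb s (1 + 2 ε)`, so that the second term sums to at most `4 ε`. -/
theorem nb_sub {s ε : ℝ} (hs : 0 < s) (h0 : 0 < ε) (h1 : ε ≤ 1 / 2) :
    ∑' j, |nb s (1 + ε) j - nb s 1 j| ≤ 5 / 2 * ε := by
  have hp := nb_hasSum hs 1
  have hq := nb_hasSum hs (1 + ε)
  have hm := nb_hasSum hs (1 + 2 * ε)
  have hbd := ((hp.mul_left ε).add
    ((((hm.mul_left (1 + 4 * ε ^ 2)).sub (hq.mul_left 2)).add hp).mul_left (1 / ε))).mul_left (1 / 2)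
  have hle : ∀ j, |nb s (1 + ε) j - nb s 1 j| ≤ 1 / 2 * (ε * nb s 1 j +
      1 / ε * ((1 + 4 * ε ^ 2) * nb s (1 + 2 * ε) j - 2 * nb s (1 + ε) j + nb s 1 j)) := by
    intro j
    have hcf : ∀ j, cf (-1) j = 1 := by
      intro j
      refine Finset.prod_eq_one fun i _ => ?_
      rw [sub_neg_eq_add, div_self (by positivity)]
    have hpj : 0 < nb s 1 j := by
      rw [nb, hcf]
      positivity
    have hsq : nb s (1 + ε) j ^ 2 ≤ (1 + 4 * ε ^ 2) * nb s (1 + 2 * ε) j * nb s 1 j := by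
      have hσ : ((s / (1 + s)) ^ (1 + ε)) ^ 2 =
          (s / (1 + s)) ^ (1 + 2 * ε) * (s / (1 + s)) ^ (1 : ℝ) := by
        rw [← Real.rpow_add (by positivity), sq, ← Real.rpow_add (by positivity)]
        congr 1
        ring
      have h := mul_le_mul_of_nonneg_left (cf_sq_le h0.le h1 j)
        (by positivity : 0 ≤ ((s / (1 + s)) ^ (1 + ε)) ^ 2 * (((1 + s)⁻¹) ^ j) ^ 2)
      calc _ = ((s / (1 + s)) ^ (1 + ε)) ^ 2 * (((1 + s)⁻¹) ^ j) ^ 2 * cf (-(1 + ε)) j ^ 2 := by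
            rw [nb]; ring
        _ ≤ _ := h
        _ = _ := by
          rw [hσ, nb, nb, hcf]
          ring
    set p := nb s 1 j
    set q := nb s (1 + ε) j
    set m := nb s (1 + 2 * ε) j
    have h2 : |q - p| * (2 * ε * p) ≤ (ε ^ 2 * p + ((1 + 4 * ε ^ 2) * m - 2 * q + p)) * p := by
      nlinarith [sq_nonneg (|q - p| - ε * p), sq_abs (q - p)]
    have h3 : |q - p| * (2 * ε) ≤ ε ^ 2 * p + ((1 + 4 * ε ^ 2) * m - 2 * q + p) := by
      refine le_of_mul_le_mul_right ?_ hpj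
      linarith
    rw [← le_div_iff₀ (by positivity)] at h3
    refine h3.trans (le_of_eq ?_)
    field_simp
  have hs' : Summable fun j => |nb s (1 + ε) j - nb s 1 j| := (hq.summable.sub hp.summable).abs
  refine (hs'.tsum_le_tsum hle hbd.summable).trans (le_of_eq ?_)
  rw [hbd.tsum_eq]
  field_simp
  ring

variable {𝒜 : Type*} [NormedCommRing 𝒜] [NormedAlgebra ℝ 𝒜]

theorem ps_linCoef (a b : ℝ) (x : 𝒜) : ps (linCoef a b) x = a • (1 : 𝒜) + b • x := by
  rw [ps, tsum_eq_sum (s := Finset.range 2)]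
  · simp [Finset.sum_range_succ, linCoef]
  · intro k hk
    match k, hk with
    | 0, hk => simp at hk
    | 1, hk => simp at hk
    | k + 2, _ => simp [linCoef]

theorem ps_smul (a : ℝ) (c : ℕ → ℝ) (x : 𝒜) : ps (fun k => a * c k) x = a • ps c x := by
  simp only [ps, mul_smul]
  exact tsum_const_smul'' a

/-- For a power bounded `x`, the element `(1 - x) ^ β` is close to `1 - x` if `β` is close to `1`. -/
theorem ps_cf_sub [CompleteSpace 𝒜] {β C : ℝ} (h1 : 1 ≤ β) (h2 : β ≤ 2) {x : 𝒜} (hx : ∀ n : ℕ, ‖x ^ n‖ ≤ C) :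
    ‖ps (cf β) x - (1 - x)‖ ≤ C * (2 * (β - 1)) := by
  have e : (1 - x : 𝒜) = ps (linCoef 1 (-1)) x := by rw [ps_linCoef]; simp [sub_eq_add_neg]
  rw [e, ps_sub (cf_summable h1 h2) (linCoef_summable _ _) hx]
  exact ps_norm_le ((cf_summable h1 h2).sub (linCoef_summable _ _)) (cf_sub_linCoef h1 h2) hx

/-- For `B = s (1 + s - x)⁻¹`, the power `B ^ k` is the average of the powers of `x` with weights
`nb s k`; in particular `B` is power bounded with the same constant as `x`. -/
theorem ps_nb_pow [CompleteSpace 𝒜] {s C : ℝ} (hs : 0 < s) {x : 𝒜} (hx : ∀ n : ℕ, ‖x ^ n‖ ≤ C) (k : ℕ) :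
    ps (nb s 1) x ^ k = ps (nb s k) x := by
  induction k with
  | zero =>
    rw [show nb s ((0 : ℕ) : ℝ) = linCoef 1 0 by funext j; simpa using nb_zero s j, ps_linCoef]
    simp
  | succ k ih =>
    rw [pow_succ, ih, ps_mul (nb_hasSum hs _).summable (nb_hasSum hs _).summable hx, nb_conv hs]
    push_cast
    rfl

theorem ps_nb_norm {s C β : ℝ} (hs : 0 < s) (hβ : 0 ≤ β) {x : 𝒜} (hx : ∀ n : ℕ, ‖x ^ n‖ ≤ C) :
    ‖ps (nb s β) x‖ ≤ C := by
  have h := ps_norm_le (b := 1) (nb_hasSum hs β).summable (by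
    simp only [abs_of_nonneg (nb_nonneg hs hβ _), (nb_hasSum hs β).tsum_eq, le_refl]) hx
  simpa using h

/-- `ps (nb s 1) x` is `s` times the resolvent of `x` at `1 + s`. -/
theorem ps_nb_one [CompleteSpace 𝒜] {s C : ℝ} (hs : 0 < s) {x : 𝒜} (hx : ∀ n : ℕ, ‖x ^ n‖ ≤ C) :
    ((1 + s) • (1 : 𝒜) - x) * ps (nb s 1) x = s • (1 : 𝒜) := by
  have e : cauchyProd (linCoef (1 + s) (-1)) (nb s 1) = linCoef s 0 := by
    refine ps_unique (conv_summable (linCoef_summable _ _) (nb_hasSum hs 1).summable)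
      (linCoef_summable _ _) fun x hx => ?_
    have : 1 + s - x ≠ 0 := by linarith [(abs_lt.1 hx).2]
    rw [← ps_mul (linCoef_summable _ _) (nb_hasSum hs 1).summable (pow_norm_le_one hx),
      nb_ps_real hs _ hx.le, ps_linCoef, ps_linCoef, Real.rpow_one]
    simp only [smul_eq_mul]
    field_simp
    ring
  have h := ps_mul (linCoef_summable (1 + s) (-1)) (nb_hasSum hs 1).summable hx
  rw [e, ps_linCoef, ps_linCoef] at h
  simpa [sub_eq_add_neg] using h

/-- The functional equation `(1 - x) ^ α * b ^ α = s ^ α * (1 - b) ^ α` for `b = s / (1 + s - x)`,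
in a Banach algebra. -/
theorem ps_cf_mul_nb [CompleteSpace 𝒜] {s α C : ℝ} (hs : 0 < s) (h1 : 1 ≤ α) (h2 : α ≤ 2) {x : 𝒜}
    (hx : ∀ n : ℕ, ‖x ^ n‖ ≤ C) :
    ps (cf α) x * ps (nb s α) x = s ^ α • ps (cf α) (ps (nb s 1) x) := by
  have hg := cf_summable h1 h2
  have hn : ∀ k : ℕ, HasSum (nb s k) 1 := fun k => nb_hasSum hs k
  have hn0 : ∀ k j : ℕ, 0 ≤ nb s k j := fun k => nb_nonneg hs (Nat.cast_nonneg k)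
  have e : cauchyProd (cf α) (nb s α) = fun j => s ^ α * ∑' k : ℕ, cf α k * nb s k j := by
    refine ps_unique (conv_summable hg (nb_hasSum hs α).summable)
      ((mix_summable (q := fun k => nb s k) hg hn0 hn).mul_left _) fun x hx => ?_
    have hx1 := (abs_lt.1 hx).2
    have hpos : 0 < 1 + s - x := by linarith
    rw [← ps_mul hg (nb_hasSum hs α).summable (pow_norm_le_one hx), ps_smul,
      ← ps_comp (q := fun k => nb s k) hg hn0 hn (pow_norm_le_one hx), nb_ps_real hs _ hx.le]
    have hb : |s / (1 + s - x)| < 1 := by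
      rw [abs_of_pos (by positivity), div_lt_one hpos]
      linarith
    have e1 : ps (cf α) x = (1 - x) ^ α := (cf_hasSum α hx).tsum_eq
    have e2 : ∑' k : ℕ, cf α k • ps (nb s k) x = (1 - s / (1 + s - x)) ^ α := by
      rw [← (cf_hasSum α hb).tsum_eq]
      refine tsum_congr fun k => ?_
      rw [nb_ps_real hs _ hx.le, Real.rpow_natCast, smul_eq_mul]
    have h3 : 1 - s / (1 + s - x) = (1 - x) / (1 + s - x) := by
      field_simp
      ring
    have h4 : 0 < 1 - x := by linarith
    rw [e1, e2, h3, smul_eq_mul, ← Real.mul_rpow (by positivity) (by positivity),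
      ← Real.mul_rpow (by positivity) (by positivity)]
    congr 1
    ring
  rw [ps_mul hg (nb_hasSum hs α).summable hx, e, ps_smul,
    ← ps_comp (q := fun k => nb s k) hg hn0 hn hx]
  congr 1
  exact tsum_congr fun k => by rw [ps_nb_pow hs hx]

theorem ps_nb_sub [CompleteSpace 𝒜] {s ε C : ℝ} (hs : 0 < s) (h0 : 0 < ε) (h1 : ε ≤ 1 / 2) {x : 𝒜}
    (hx : ∀ n : ℕ, ‖x ^ n‖ ≤ C) :
    ‖ps (nb s (1 + ε)) x - ps (nb s 1) x‖ ≤ C * (5 / 2 * ε) := by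
  rw [ps_sub (nb_hasSum hs _).summable (nb_hasSum hs _).summable hx]
  exact ps_norm_le ((nb_hasSum hs _).summable.sub (nb_hasSum hs _).summable) (nb_sub hs h0 h1) hx

end NegativeBinomial

/-! ### The perturbation argument -/

section Perturbation
variable {𝒜 : Type*} [NormedCommRing 𝒜] [NormedAlgebra ℂ 𝒜] [CompleteSpace 𝒜]

theorem exists_inv_of_close {𝒜 : Type*} [NormedCommRing 𝒜] [CompleteSpace 𝒜] {W₀ V₀ W : 𝒜}
    (h : W₀ * V₀ = 1) (hd : ‖W - W₀‖ * ‖V₀‖ ≤ 1 / 2) : ∃ V, W * V = 1 ∧ ‖V‖ ≤ 2 * ‖V₀‖ := by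
  set E := (W₀ - W) * V₀ with hE
  have hEn : ‖E‖ ≤ 1 / 2 := by
    refine (norm_mul_le _ _).trans ?_
    rwa [norm_sub_rev]
  obtain ⟨F, hF⟩ := (isUnit_one_sub_of_norm_lt_one (x := E) (by linarith)).exists_right_inv
  refine ⟨V₀ * F, ?_, ?_⟩
  · linear_combination F * h + hF - F * hE
  · have e : V₀ * F = V₀ + E * (V₀ * F) := by linear_combination V₀ * hF
    have h1 : ‖V₀ * F‖ ≤ ‖V₀‖ + ‖E‖ * ‖V₀ * F‖ := by
      conv_lhs => rw [e]
      exact (norm_add_le _ _).trans (add_le_add le_rfl (norm_mul_le _ _))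
    nlinarith [norm_nonneg (V₀ * F)]

theorem one_lt_norm_one_add_smul {μ : ℂ} {t : ℝ} (ht : 1 ≤ t) (h : 1 < ‖1 + μ‖) :
    1 < ‖1 + (t : ℂ) * μ‖ := by
  have h1 : 1 < ‖1 + μ‖ ^ 2 := by nlinarith
  have h2 : 1 < ‖1 + (t : ℂ) * μ‖ ^ 2 := by
    rw [Complex.sq_norm, Complex.normSq_apply] at h1 ⊢
    simp only [Complex.add_re, Complex.one_re, Complex.add_im, Complex.one_im, Complex.mul_re,
      Complex.mul_im, Complex.ofReal_re, Complex.ofReal_im, zero_mul, sub_zero, add_zero,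
      zero_add] at h1 ⊢
    have h3 : 0 < 2 * μ.re + t * (μ.re * μ.re + μ.im * μ.im) := by
      nlinarith [mul_self_nonneg μ.re, mul_self_nonneg μ.im]
    nlinarith
  nlinarith [norm_nonneg (1 + (t : ℂ) * μ)]

/-- The resolvent condition passes from `T` to `S = 1 - (1 - T) ^ (1 + ε)` for small `ε`. If
`|z| ≤ |1 - z|`, then `1 - z S` is a small perturbation of `1 - z T`. Otherwise put
`μ = (1 - z) / z`, `s ^ (1 + ε) = |μ|`, `u = μ / |μ|` and `B = s (s + (1 - T))⁻¹`. Then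
`(μ + (1 - T) ^ (1 + ε)) B ^ (1 + ε) = |μ| (u B ^ (1 + ε) + (1 - B) ^ (1 + ε))`, and the last factor
is a perturbation of size `O(ε)` of `u B + (1 - B)`, whose inverse is explicit in terms of the
resolvent of `T`. -/
theorem ResCond.one_sub_cf {T : 𝒜} {C K ε : ℝ} (hC : ∀ n : ℕ, ‖T ^ n‖ ≤ C) (hK : ResCond K T)
    (h0 : 0 < ε) (h1 : ε ≤ 1 / 2) (hε : 9 * C * ε * (C + 2 * K) ≤ 1) :
    ResCond (2 * K + 2 * C * (C + 2 * K)) (1 - ps (cf (1 + ε)) T) := by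
  have hC0 : 0 ≤ C := (norm_nonneg _).trans (hC 0)
  have hK0 : 0 ≤ K := by
    obtain ⟨R, _, hR⟩ := hK 0 (by simp)
    exact (by positivity : 0 ≤ ‖(1 : ℂ) - 0‖ * ‖R‖).trans hR
  have hα1 : 1 ≤ 1 + ε := by linarith
  have hα2 : 1 + ε ≤ 2 := by linarith
  have hCK : 0 ≤ C * (C + 2 * K) := by positivity
  set G := ps (cf (1 + ε)) T with hG
  have hGT := ps_cf_sub hα1 hα2 hC
  rw [← hG] at hGT
  intro z hz
  by_cases hcase : ‖z‖ ≤ ‖1 - z‖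
  · obtain ⟨R, hR, hRn⟩ := hK z hz
    obtain ⟨V, hV, hVn⟩ := exists_inv_of_close (W := 1 - z • (1 - G)) hR (by
      have e : 1 - z • (1 - G) - (1 - z • T) = z • (G - (1 - T)) := by
        simp only [Algebra.smul_def]
        ring
      rw [e, norm_smul]
      have a1 : ‖z‖ * ‖R‖ ≤ K :=
        (mul_le_mul_of_nonneg_right hcase (norm_nonneg R)).trans hRn
      have a2 : ‖G - (1 - T)‖ * (‖z‖ * ‖R‖) ≤ C * (2 * (1 + ε - 1)) * K :=
        mul_le_mul hGT a1 (by positivity) (by rw [add_sub_cancel_left]; positivity)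
      have a3 : 0 ≤ C * ε * C := by positivity
      nlinarith)
    refine ⟨V, hV, ?_⟩
    have := mul_le_mul_of_nonneg_left hVn (norm_nonneg (1 - z))
    nlinarith
  · push Not at hcase
    have hz0 : z ≠ 0 := by
      rintro rfl
      simp at hcase
      linarith
    have hz1 : 1 - z ≠ 0 := by
      intro h
      rw [← sub_eq_zero.1 h] at hz
      simp at hz
    set μ : ℂ := (1 - z) / z with hμ
    set m : ℝ := ‖μ‖ with hm
    have hμ0 : μ ≠ 0 := div_ne_zero hz1 hz0
    have hm0 : 0 < m := norm_pos_iff.2 hμ0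
    have hm1 : m ≤ 1 := by
      rw [hm, hμ, norm_div]
      exact div_le_one_of_le₀ hcase.le (norm_nonneg _)
    set s : ℝ := m ^ (1 / (1 + ε)) with hs
    have hs0 : 0 < s := Real.rpow_pos_of_pos hm0 _
    have hsα : s ^ (1 + ε) = m := by
      rw [hs, ← Real.rpow_mul hm0.le, one_div_mul_cancel (by linarith), Real.rpow_one]
    have hsm : m ≤ s := by
      have := Real.rpow_le_rpow_of_exponent_ge hm0 hm1
        (show 1 / (1 + ε) ≤ 1 by rw [div_le_one (by linarith)]; linarith)
      rwa [Real.rpow_one] at this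
    have hmC : (m : ℂ) ≠ 0 := by exact_mod_cast hm0.ne'
    set u : ℂ := μ / m with hu
    have hun : ‖u‖ = 1 := by
      rw [hu, norm_div, Complex.norm_real, Real.norm_of_nonneg hm0.le, ← hm, div_self hm0.ne']
    set ν : ℂ := s * u with hν
    have hνn : ‖ν‖ = s := by
      rw [hν, norm_mul, hun, mul_one, Complex.norm_real, Real.norm_of_nonneg hs0.le]
    have hν1 : 1 < ‖1 + ν‖ := by
      have e : ν = ((s / m : ℝ) : ℂ) * μ := by
        rw [hν, hu]
        push_cast
        ring
      rw [e]
      refine one_lt_norm_one_add_smul ((one_le_div hm0).2 hsm) ?_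
      have e2 : 1 + μ = z⁻¹ := by
        rw [hμ]
        field_simp
        ring
      rw [e2, norm_inv]
      exact (one_lt_inv₀ (norm_pos_iff.2 hz0)).2 hz
    have hν0 : 1 + ν ≠ 0 := by
      intro h
      rw [h] at hν1
      simp at hν1
      linarith
    -- `1 / (1 + ν)` lies in the disc, so the hypothesis on `T` makes
    -- `ν + (1 - T)` invertible, with inverse `V`
    obtain ⟨R, hR, hRn⟩ := hK (1 + ν)⁻¹ (by
      rw [norm_inv]
      exact inv_lt_one_of_one_lt₀ hν1)
    set V : 𝒜 := (1 + ν)⁻¹ • R with hVdef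
    have hV : (1 + algebraMap ℂ 𝒜 ν - T) * V = 1 := by
      have e : algebraMap ℂ 𝒜 (1 + ν) * algebraMap ℂ 𝒜 (1 + ν)⁻¹ = 1 := by
        rw [← map_mul, mul_inv_cancel₀ hν0, map_one]
      rw [Algebra.smul_def] at hR hVdef
      rw [map_add, map_one] at e
      rw [hVdef]
      linear_combination hR + R * e
    have hVn : s * ‖V‖ ≤ K := by
      have e : 1 - (1 + ν)⁻¹ = ν * (1 + ν)⁻¹ := by
        field_simp
        ring
      rw [e, norm_mul, hνn, mul_assoc] at hRn
      rwa [hVdef, norm_smul]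
    -- `B = s (s + (1 - T))⁻¹`, `D = B ^ (1 + ε)`, `H = (1 - B) ^ (1 + ε)`
    set B : 𝒜 := ps (nb s 1) T with hBdef
    set D : 𝒜 := ps (nb s (1 + ε)) T with hDdef
    set H : 𝒜 := ps (cf (1 + ε)) B with hHdef
    have hBC : ∀ n : ℕ, ‖B ^ n‖ ≤ C := fun n => by
      rw [hBdef, ps_nb_pow hs0 hC]
      exact ps_nb_norm hs0 (Nat.cast_nonneg n) hC
    have hDC : ‖D‖ ≤ C := ps_nb_norm hs0 (by linarith) hC
    have hDB : ‖D - B‖ ≤ C * (5 / 2 * ε) := ps_nb_sub hs0 h0 h1 hC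
    have hHB : ‖H - (1 - B)‖ ≤ C * (2 * (1 + ε - 1)) := ps_cf_sub hα1 hα2 hBC
    have hre : ∀ (r : ℝ) (x : 𝒜), r • x = algebraMap ℂ 𝒜 r * x := fun r x => by
      rw [← Algebra.smul_def, Complex.coe_smul]
    have hB : (1 + algebraMap ℂ 𝒜 s - T) * B = algebraMap ℂ 𝒜 s := by
      have := ps_nb_one hs0 hC
      rw [hre, hre, Complex.ofReal_add, Complex.ofReal_one, map_add, map_one] at this
      linear_combination this
    have hGD : G * D = algebraMap ℂ 𝒜 m * H := by
      rw [← hre, ← hsα]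
      exact ps_cf_mul_nb hs0 hα1 hα2 hC
    have hN : algebraMap ℂ 𝒜 ν = algebraMap ℂ 𝒜 s * algebraMap ℂ 𝒜 u := by rw [← map_mul]
    have hW₀ : (u • B + (1 - B)) * (1 + ((s : ℂ) - ν) • V) = 1 := by
      simp only [Algebra.smul_def, map_sub]
      rw [hN] at hV ⊢
      linear_combination (algebraMap ℂ 𝒜 u - 1) * V * hB +
        (1 - (algebraMap ℂ 𝒜 u * B + (1 - B))) * hV
    have hV₀n : ‖1 + ((s : ℂ) - ν) • V‖ ≤ C + 2 * K := by
      have a1 : ‖(1 : 𝒜)‖ ≤ C := by simpa using hC 0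
      have a2 : ‖(s : ℂ) - ν‖ ≤ 2 * s := by
        refine (norm_sub_le _ _).trans ?_
        rw [hνn, Complex.norm_real, Real.norm_of_nonneg hs0.le]
        linarith
      have a3 : ‖((s : ℂ) - ν) • V‖ ≤ 2 * s * ‖V‖ := by
        rw [norm_smul]
        exact mul_le_mul_of_nonneg_right a2 (norm_nonneg V)
      have a4 := norm_add_le (1 : 𝒜) (((s : ℂ) - ν) • V)
      linarith
    obtain ⟨V', hV', hVn'⟩ := exists_inv_of_close (W := u • D + H) hW₀ (by
      have e : u • D + H - (u • B + (1 - B)) = u • (D - B) + (H - (1 - B)) := by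
        rw [smul_sub]
        abel
      have a1 : ‖u • D + H - (u • B + (1 - B))‖ ≤ 9 / 2 * C * ε := by
        rw [e]
        refine (norm_add_le _ _).trans ?_
        rw [norm_smul, hun, one_mul]
        linarith
      have a2 := mul_le_mul a1 hV₀n (norm_nonneg _) (by positivity)
      linarith)
    refine ⟨(z * m)⁻¹ • (D * V'), ?_, ?_⟩
    · have b1 : algebraMap ℂ 𝒜 z * algebraMap ℂ 𝒜 m * algebraMap ℂ 𝒜 (z * m)⁻¹ = 1 := by
        rw [← map_mul, ← map_mul, mul_inv_cancel₀ (mul_ne_zero hz0 hmC), map_one]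
      have b2 : 1 - algebraMap ℂ 𝒜 z =
          algebraMap ℂ 𝒜 z * algebraMap ℂ 𝒜 m * algebraMap ℂ 𝒜 u := by
        rw [← map_mul, ← map_mul, ← map_one (algebraMap ℂ 𝒜), ← map_sub]
        congr 1
        rw [hu, hμ]
        field_simp
      rw [Algebra.smul_def] at hV'
      simp only [Algebra.smul_def]
      generalize algebraMap ℂ 𝒜 (z * m)⁻¹ = k at *
      linear_combination k * D * V' * b2 + k * algebraMap ℂ 𝒜 z * V' * hGD +
        k * algebraMap ℂ 𝒜 z * algebraMap ℂ 𝒜 m * hV' + b1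
    · have e : ‖1 - z‖ * ‖(z * m)⁻¹ • (D * V')‖ = ‖D * V'‖ := by
        have hzm : ‖1 - z‖ = ‖z‖ * m := by
          rw [hm, hμ, norm_div]
          field_simp
        rw [norm_smul, norm_inv, norm_mul, Complex.norm_real, Real.norm_of_nonneg hm0.le, hzm,
          mul_inv_cancel_left₀ (mul_ne_zero (norm_ne_zero_iff.2 hz0) hm0.ne')]
      rw [e]
      have a1 : ‖V'‖ ≤ 2 * (C + 2 * K) := by linarith
      have a2 := (norm_mul_le D V').trans (mul_le_mul hDC a1 (norm_nonneg _) hC0)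
      linarith

theorem RittElt.exists_bound {T : 𝒜} (hT : RittElt T) :
    ∃ ε₀ : ℝ, 0 < ε₀ ∧ ε₀ ≤ 1 / 2 ∧
      ∀ ε : ℝ, 0 < ε → ε ≤ ε₀ → RittElt (1 - ps (cf (1 + ε)) T) := by
  obtain ⟨K, hK⟩ := hT.resCond
  obtain ⟨C, hC, -⟩ := hT
  have hC0 : 0 ≤ C := (norm_nonneg _).trans (hC 0)
  have hK0 : 0 ≤ K := by
    obtain ⟨R, _, hR⟩ := hK 0 (by simp)
    exact (by positivity : 0 ≤ ‖(1 : ℂ) - 0‖ * ‖R‖).trans hR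
  have hpos : 0 < 9 * C * (C + 2 * K) + 2 := by positivity
  refine ⟨1 / (9 * C * (C + 2 * K) + 2), by positivity, ?_, fun ε h0 h1 => ?_⟩
  · exact one_div_le_one_div_of_le (by norm_num) (by linarith [show 0 ≤ 9 * C * (C + 2 * K) by positivity])
  · rw [le_div_iff₀ hpos] at h1
    have h2 : 0 ≤ ε * (9 * C * (C + 2 * K)) := by positivity
    exact (hK.one_sub_cf hC h0 (by linarith) (by linarith)).ritt

end Perturbation

/-! ### Operators -/

section Transfer

theorem aCoef_succ_eq_s6 (α : ℝ) (k : ℕ) : aCoef α (k + 1) = -cf α (k + 1) := by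
  have h : cf α (k + 1) = (-1) ^ (k + 1) * (∏ i ∈ Finset.range (k + 1), (α - i)) /
      (Nat.factorial (k + 1)) := by
    rw [cf, Finset.prod_div_distrib, ← Finset.prod_range_add_one_eq_factorial]
    push_cast
    congr 1
    rw [← Finset.card_range (k + 1), ← Finset.prod_const, Finset.card_range,
      ← Finset.prod_mul_distrib]
    exact Finset.prod_congr rfl fun i _ => by ring
  rw [h, aCoef, Nat.add_sub_cancel, pow_succ]
  ring

theorem one_sub_ps_cf {𝒜 : Type*} [NormedCommRing 𝒜] [NormedAlgebra ℂ 𝒜] [CompleteSpace 𝒜]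
    {α C : ℝ} (h1 : 1 ≤ α) (h2 : α ≤ 2) {x : 𝒜} (hx : ∀ n : ℕ, ‖x ^ n‖ ≤ C) :
    HasSum (fun k : ℕ => (aCoef α (k + 1) : ℂ) • x ^ (k + 1)) (1 - ps (cf α) x) := by
  have h := (ps_summable_norm (cf_summable h1 h2) hx).of_norm.hasSum
  have h3 := ((hasSum_nat_add_iff' 1).2 h).neg
  simp only [Finset.sum_range_one, cf_zero, one_smul, pow_zero, neg_sub] at h3
  convert! h3 using 2 with k
  rw [aCoef_succ_eq_s6, Complex.coe_smul, neg_smul]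

end Transfer

/-- If `T` is a Ritt operator on a complex Banach space, then there is `α₀ > 1` such that
for every non-integer `α ∈ (1, α₀)`, the operator `T_α = Σ_{k≥1} a_{α,k} T^k` is again a
Ritt operator. -/
theorem stmt_6 {X : Type*} [NormedAddCommGroup X] [NormedSpace ℂ X] [CompleteSpace X]
    (T : X →L[ℂ] X) (hT : IsRitt T) :
    ∃ α₀ : ℝ, 1 < α₀ ∧
      ∀ α : ℝ, 1 < α → α < α₀ → (∀ n : ℤ, α ≠ (n : ℝ)) → IsRitt (fracPow α T) := by
  -- the closed subalgebra generated by `T` is a commutative Banach algebra; it inherits the norm,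
  -- so the Ritt conditions in it and in `X →L[ℂ] X` are the same statement
  let 𝒜 := Algebra.elemental ℂ T
  let _ : NormedCommRing 𝒜 := { (inferInstance : NormedRing 𝒜) with mul_comm := mul_comm }
  let _ : NormedAlgebra ℂ 𝒜 :=
    { (inferInstance : Algebra ℂ 𝒜) with
      norm_smul_le := fun r x => norm_smul_le r (x : X →L[ℂ] X) }
  let τ : 𝒜 := ⟨T, Algebra.elemental.self_mem ℂ T⟩
  let ι : 𝒜 →L[ℂ] (X →L[ℂ] X) := 𝒜.toSubmodule.subtypeL
  have hpow : ∀ (a : 𝒜) (n : ℕ), ι (a ^ n) = ι a ^ n := fun a n => rfl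
  have hnorm : ∀ a : 𝒜, ‖a‖ = ‖ι a‖ := fun a => rfl
  have hRitt : ∀ a : 𝒜, RittElt a ↔ IsRitt (ι a) := fun a => Iff.rfl
  have hτ : RittElt τ := hT
  obtain ⟨ε₀, hε₀, hε₁, H⟩ := hτ.exists_bound
  refine ⟨1 + ε₀, by linarith, fun α h1 h2 _ => ?_⟩
  obtain ⟨C, hC, -⟩ := hτ
  have hsum := ι.hasSum (one_sub_ps_cf h1.le (by linarith) hC)
  have e : fracPow α T = ι (1 - ps (cf α) τ) := by
    rw [← hsum.tsum_eq]
    rfl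
  rw [e, ← hRitt]
  have := H (α - 1) (by linarith) (by linarith)
  rwa [add_sub_cancel] at this
end

section
/- Let M be a monoid, let X and Z be Banach spaces, and let π : M → B(X) and ρ : M → B(Z) be representations of M, i.e. π(st) = π(s)π(t) for all s, t ∈ M and π(e) = Id_X, and similarly for ρ. Suppose J : X → Z and Q : Z → X are bounded linear operators such that π(t) = Q ∘ ρ(t) ∘ J for all t ∈ M. Then there exist closed subspaces F ⊆ E ⊆ Z with ρ(t)(E) ⊆ E and ρ(t)(F) ⊆ F for every t ∈ M, and a continuous linear isomorphism S : X → E/F (the quotient carrying the quotient norm) with ‖S‖·‖S^{−1}‖ ≤ ‖Q‖·‖J‖, such that π(t) = S^{−1} ∘ ρ̃(t) ∘ S for all t ∈ M, where ρ̃(t) : E/F → E/F is the compression of ρ(t), i.e. ρ̃(t)(x + F) = ρ(t)x + F for x ∈ E. -/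
open scoped BigOperators

/-!
Take for `E` the largest subspace of `Z` on which `Q` intertwines `ρ` and `π`,
`E = {z | Q (ρ(s) z) = π(s) (Q z) for all s}`, and put `F = E ∩ ker Q`. Both are closed, and both
are `ρ`-invariant because `ρ` and `π` are multiplicative. The factorization at `t = 1` gives
`Q ∘ J = id`, and together with the factorization at general `t` this gives `J(X) ⊆ E`. Hence
`Q` induces a bijection `E/F → X` whose inverse is `S : x ↦ J x + F`; clearly `‖S‖ ≤ ‖J‖`, and
`‖S⁻¹‖ ≤ ‖Q‖` by `norm_liftQL_le`. Since `Q` intertwines on `E`, the map `S` conjugates the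
compression of `ρ(t)` to `π(t)`.
-/

/-- Passing to a quotient (with the quotient seminorm) does not increase the operator norm. -/
theorem norm_liftQL_le {V W : Type*} [SeminormedAddCommGroup V] [NormedSpace ℂ V]
    [SeminormedAddCommGroup W] [NormedSpace ℂ W] (S : Submodule ℂ V) (f : V →L[ℂ] W)
    (h : S ≤ f.ker) : ‖S.liftQL f h‖ ≤ ‖f‖ := by
  refine ContinuousLinearMap.opNorm_le_bound _ (norm_nonneg _) fun x => ?_
  have key : ∀ δ : ℝ, 0 < δ → ‖S.liftQL f h x‖ ≤ ‖f‖ * (‖x‖ + δ) := by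
    intro δ hδ
    obtain ⟨m, hm, hlt⟩ := Submodule.Quotient.norm_mk_lt x hδ
    have hx : S.liftQL f h x = f m := by rw [← hm]; rfl
    rw [hx]
    exact (f.le_opNorm m).trans (by gcongr)
  have hlim : Filter.Tendsto (fun δ : ℝ => ‖f‖ * (‖x‖ + δ)) (nhdsWithin 0 (Set.Ioi 0))
      (nhds (‖f‖ * (‖x‖ + 0))) :=
    (Continuous.tendsto (by fun_prop) 0).mono_left nhdsWithin_le_nhds
  rw [add_zero] at hlim
  exact ge_of_tendsto hlim (Filter.eventually_of_mem self_mem_nhdsWithin key)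

/-- If a representation `π` of a monoid `M` on a Banach space `X` factors as
`π(t) = Q ∘ ρ(t) ∘ J` through a representation `ρ` on a Banach space `Z`, then `π` is
similar, with similarity constant at most `‖Q‖·‖J‖`, to a compression of `ρ` to a quotient
`E/F` of `ρ`-invariant closed subspaces `F ⊆ E ⊆ Z`. -/
theorem stmt_13 {M : Type*} [Monoid M]
    {X Z : Type*} [NormedAddCommGroup X] [NormedSpace ℂ X] [CompleteSpace X]
    [NormedAddCommGroup Z] [NormedSpace ℂ Z] [CompleteSpace Z]
    (π : M → X →L[ℂ] X)
    (hπmul : ∀ s t : M, π (s * t) = (π s).comp (π t))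
    (hπone : π 1 = ContinuousLinearMap.id ℂ X)
    (ρ : M → Z →L[ℂ] Z)
    (hρmul : ∀ s t : M, ρ (s * t) = (ρ s).comp (ρ t))
    (hρone : ρ 1 = ContinuousLinearMap.id ℂ Z)
    (J : X →L[ℂ] Z) (Q : Z →L[ℂ] X)
    (hfact : ∀ t : M, π t = Q.comp ((ρ t).comp J)) :
    ∃ (E F : Submodule ℂ Z),
      F ≤ E ∧ IsClosed (E : Set Z) ∧ IsClosed (F : Set Z) ∧
      (∀ t : M, ∀ z ∈ E, ρ t z ∈ E) ∧ (∀ t : M, ∀ z ∈ F, ρ t z ∈ F) ∧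
      ∃ (S : X ≃L[ℂ] (E ⧸ F.comap E.subtype))
        (ρtilde : M → (E ⧸ F.comap E.subtype) →L[ℂ] (E ⧸ F.comap E.subtype)),
        ‖(S : X →L[ℂ] (E ⧸ F.comap E.subtype))‖ *
            ‖(S.symm : (E ⧸ F.comap E.subtype) →L[ℂ] X)‖ ≤ ‖Q‖ * ‖J‖ ∧
        (∀ (t : M) (z : E) (hz : ρ t (z : Z) ∈ E),
          ρtilde t (Submodule.Quotient.mk z) =
            Submodule.Quotient.mk (⟨ρ t (z : Z), hz⟩ : E)) ∧
        ∀ (t : M) (x : X), π t x = S.symm (ρtilde t (S x)) := by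
  have hQJ : ∀ x, Q (J x) = x := fun x => by
    have h := congrArg (fun T : X →L[ℂ] X => T x) (hfact 1)
    simpa [hπone, hρone] using h.symm
  have hQρJ : ∀ s x, Q (ρ s (J x)) = π s x := fun s x => by rw [hfact s]; rfl
  let E : Submodule ℂ Z := ⨅ s : M, (Q.comp (ρ s) - (π s).comp Q).ker
  have hE : ∀ z, z ∈ E ↔ ∀ s, Q (ρ s z) = π s (Q z) := fun z => by
    simp [E, Submodule.mem_iInf, sub_eq_zero]
  let F : Submodule ℂ Z := E ⊓ Q.ker
  have hF : ∀ z, z ∈ F ↔ z ∈ E ∧ Q z = 0 := fun z => by simp [F]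
  have hEcl : IsClosed (E : Set Z) := by
    simp only [E, Submodule.coe_iInf]
    exact isClosed_iInter fun s => ContinuousLinearMap.isClosed_ker _
  have hFcl : IsClosed (F : Set Z) := hEcl.inter (ContinuousLinearMap.isClosed_ker Q)
  have hEinv : ∀ t : M, ∀ z ∈ E, ρ t z ∈ E := fun t z hz => by
    rw [hE] at hz ⊢
    intro s
    have h := hz (s * t)
    rw [hρmul, hπmul] at h
    rw [hz t]
    exact h
  have hFinv : ∀ t : M, ∀ z ∈ F, ρ t z ∈ F := fun t z hz => by
    rw [hF] at hz ⊢
    refine ⟨hEinv t z hz.1, ?_⟩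
    rw [(hE z).1 hz.1 t, hz.2, map_zero]
  have hJE : ∀ x, J x ∈ E := fun x => (hE _).2 fun s => by rw [hQJ, hQρJ]
  let N : Submodule ℂ E := F.comap E.subtype
  have hN : ∀ z : E, z ∈ N ↔ Q (z : Z) = 0 := fun z => by
    simp [N, hF]
  let JE : X →L[ℂ] E := J.codRestrict E hJE
  let QE : E →L[ℂ] X := Q.comp E.subtypeL
  have hQE : N ≤ QE.ker := fun z hz => (hN z).1 hz
  let A : X →L[ℂ] E ⧸ N := N.mkQL.comp JE
  let B : (E ⧸ N) →L[ℂ] X := N.liftQL QE hQE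
  have hBmk : ∀ z : E, B (Submodule.Quotient.mk z) = Q (z : Z) := fun z => rfl
  have hBA : Function.LeftInverse B A := fun x => hQJ x
  have hAB : Function.RightInverse B A := fun y => by
    obtain ⟨z, rfl⟩ := Submodule.Quotient.mk_surjective N y
    refine (Submodule.Quotient.eq N).2 ((hN _).2 ?_)
    change Q (J (Q z) - z) = 0
    rw [map_sub, hQJ, sub_self]
  let S : X ≃L[ℂ] E ⧸ N := ContinuousLinearEquiv.equivOfInverse A B hBA hAB
  let R : M → E →L[ℂ] E := fun t =>
    ((ρ t).comp E.subtypeL).codRestrict E fun z => hEinv t z z.2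
  have hR : ∀ t, N ≤ (N.mkQL.comp (R t)).ker := fun t z hz =>
    (Submodule.Quotient.mk_eq_zero N).2 (hFinv t z hz)
  refine ⟨E, F, inf_le_left, hEcl, hFcl, hEinv, hFinv, S,
    fun t => N.liftQL (N.mkQL.comp (R t)) (hR t), ?_, fun t z hz => rfl, fun t x => ?_⟩
  · have hA : ‖A‖ ≤ ‖J‖ := ContinuousLinearMap.opNorm_le_bound _ (norm_nonneg _) fun x =>
      (Submodule.Quotient.norm_mk_le N (JE x)).trans (J.le_opNorm x)
    have hB : ‖B‖ ≤ ‖Q‖ := (norm_liftQL_le N QE hQE).trans <|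
      ContinuousLinearMap.opNorm_le_bound _ (norm_nonneg _) fun z => Q.le_opNorm z
    rw [mul_comm ‖Q‖]
    exact mul_le_mul hA hB (norm_nonneg B) (norm_nonneg J)
  · exact (hQρJ t x).symm
end
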